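/- Let n > 1 be an integer. There exist infinitely many pairwise non-isomorphic number fields K with the following properties: there is a positive integer y with y ≡ 1 (mod 12), y not divisible by 5, and y not divisible by 7, such that the polynomial x⁴ + ((yⁿ−25)/6)x³ + 2x² − ((yⁿ−25)/6)x + 1 is irreducible over ℚ and K is its splitting field; K is a totally real Galois extension of ℚ of degree 4 with Galois group isomorphic to (ℤ/2ℤ)²; and rank_n Cl(K) ≥ 3. -/

import Mathlib

open Polynomial NumberField

/-- `M` contains a subgroup isomorphic to `(ℤ/nℤ)^s`, i.e. `rank_n M ≥ s`. -/
def HasZModRankGE (M : Type*) [CommGroup M] (n s : ℕ) : Prop :=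
  ∃ φ : (Multiplicative (Fin s → ZMod n)) →* M, Function.Injective φ

/-- A number field (here a subfield of `ℂ`) is totally real if all of its complex
embeddings take real values. -/
def TotallyReal (K : Type*) [Field K] : Prop :=
  ∀ (φ : K →+* ℂ) (x : K), (φ x).im = 0


theorem ringHom_zmod_eq_of_ker {R : Type*} [CommRing R] {q : ℕ} [Fact q.Prime]
    (φ ψ : R →+* ZMod q) (h : RingHom.ker φ ≤ RingHom.ker ψ) : φ = ψ := by
  ext r
  have h1 : r - ((φ r).val : R) ∈ RingHom.ker φ := by
    rw [RingHom.mem_ker]; simp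
  have h2 := h h1
  rw [RingHom.mem_ker] at h2
  simp at h2
  exact (sub_eq_zero.mp h2).symm

theorem exists_pi_surj {R : Type*} [CommRing R] {q : ℕ} [Fact q.Prime]
    (Φ : Finset (R →+* ZMod q)) :
    Function.Surjective (RingHom.pi (fun φ : Φ => φ.1) : R →+* (Φ → ZMod q)) := by
  classical
  intro x
  have hcop : Pairwise fun i j : Φ => IsCoprime (RingHom.ker i.1) (RingHom.ker j.1) := by
    intro i j hij
    have mi : (RingHom.ker i.1).IsMaximal :=
      RingHom.ker_isMaximal_of_surjective i.1 (ZMod.ringHom_surjective i.1)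
    have mj : (RingHom.ker j.1).IsMaximal :=
      RingHom.ker_isMaximal_of_surjective j.1 (ZMod.ringHom_surjective j.1)
    rw [Ideal.isCoprime_iff_sup_eq]
    apply mi.coprime_of_ne mj
    intro he
    exact hij (Subtype.ext (ringHom_zmod_eq_of_ker _ _ he.le))
  obtain ⟨r, hr⟩ := Ideal.exists_forall_sub_mem_ideal hcop (fun i => (((x i).val : ℕ) : R))
  refine ⟨r, ?_⟩
  ext i
  have := hr i
  rw [RingHom.mem_ker] at this
  simp at this
  exact (show i.1 r = x i by simpa using sub_eq_zero.mp this)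

theorem pow_card_dvd_norm {R : Type*} [CommRing R] [IsDomain R] [Module.Free ℤ R]
    [Module.Finite ℤ R] {q : ℕ} [Fact q.Prime] (Φ : Finset (R →+* ZMod q)) (v : R) (hv : v ≠ 0)
    (h : ∀ φ ∈ Φ, φ v = 0) : q ^ Φ.card ∣ (Algebra.norm ℤ v).natAbs := by
  classical
  let b := Module.Free.chooseBasis ℤ R
  have hcard : (Algebra.norm ℤ v).natAbs = Nat.card (R ⧸ Ideal.span {v}) := by
    rw [Algebra.norm_apply]
    have := Submodule.natAbs_det_equiv ((Ideal.span {v}).restrictScalars ℤ)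
      (b.equiv (Ideal.basisSpanSingleton b hv) (Equiv.refl _))
    rw [show Nat.card (R ⧸ Ideal.span {v}) =
      Nat.card (R ⧸ (Ideal.span {v}).restrictScalars ℤ) from rfl, ← this]
    congr
    refine b.ext fun i => ?_
    have h3 : ((b.equiv (Ideal.basisSpanSingleton b hv) (Equiv.refl _)) (b i) : R) = v * b i := by
      rw [Module.Basis.equiv_apply, Equiv.refl_apply, Ideal.basisSpanSingleton_apply]
    exact h3.symm
  rw [hcard]
  have hsurj := exists_pi_surj Φ
  let g : R ⧸ Ideal.span {v} →+* (Φ → ZMod q) :=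
    Ideal.Quotient.lift _ (RingHom.pi (fun φ : Φ => φ.1)) (by
      intro a ha
      obtain ⟨c, rfl⟩ := Ideal.mem_span_singleton'.mp ha
      ext i
      change i.1 (c * v) = 0
      simp [h i.1 i.2])
  have hg : Function.Surjective g := Ideal.Quotient.lift_surjective_of_surjective _ _ hsurj
  have := AddSubgroup.card_dvd_of_surjective g.toAddMonoidHom hg
  simpa [Nat.card_eq_fintype_card] using this

theorem norm_bound {R : Type*} [CommRing R] [IsDomain R] {d : ℕ}
    (b : Module.Basis (Fin d) ℤ R) :
    ∃ M : ℕ, 0 < M ∧ ∀ (H : ℕ) (c : Fin d → ℤ), (∀ i, |c i| ≤ H) →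
      ((Algebra.norm ℤ (∑ i, c i • b i)).natAbs) ≤ M * H ^ d := by
  classical
  let B : ℕ := ∑ i, ∑ j, ∑ k, (Algebra.leftMulMatrix b (b i) j k).natAbs
  refine ⟨d.factorial * B ^ d + 1, Nat.succ_pos _, fun H c hc => ?_⟩
  have hent : ∀ j k, |Algebra.leftMulMatrix b (∑ i, c i • b i) j k| ≤ ((B * H : ℕ) : ℤ) := by
    intro j k
    rw [map_sum]
    simp only [map_smul]
    rw [Matrix.sum_apply]
    calc |∑ i, (c i • Algebra.leftMulMatrix b (b i)) j k|
        ≤ ∑ i, |(c i • Algebra.leftMulMatrix b (b i)) j k| := Finset.abs_sum_le_sum_abs _ _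
      _ ≤ ∑ i, (H : ℤ) * |Algebra.leftMulMatrix b (b i) j k| := by
          refine Finset.sum_le_sum fun i _ => ?_
          rw [Matrix.smul_apply, smul_eq_mul, abs_mul]
          exact mul_le_mul_of_nonneg_right (hc i) (abs_nonneg _)
      _ ≤ ∑ i, (H : ℤ) * ∑ j, ∑ k, |Algebra.leftMulMatrix b (b i) j k| := by
          refine Finset.sum_le_sum fun i _ => ?_
          refine mul_le_mul_of_nonneg_left ?_ (by positivity)
          refine le_trans ?_ (Finset.single_le_sum
            (f := fun j => ∑ k, |Algebra.leftMulMatrix b (b i) j k|)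
            (fun _ _ => Finset.sum_nonneg fun _ _ => abs_nonneg _) (Finset.mem_univ j))
          exact Finset.single_le_sum
            (f := fun k => |Algebra.leftMulMatrix b (b i) j k|)
            (fun _ _ => abs_nonneg _) (Finset.mem_univ k)
      _ = ((B * H : ℕ) : ℤ) := by
          simp only [B]
          push_cast
          rw [← Finset.mul_sum, mul_comm]
  have h1 := Matrix.det_le (abv := AbsoluteValue.abs) (x := ((B * H : ℕ) : ℤ)) hent
  rw [← Algebra.norm_eq_matrix_det] at h1
  simp only [AbsoluteValue.abs_apply, Fintype.card_fin, nsmul_eq_mul] at h1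
  zify
  push_cast at h1
  calc _ ≤ _ := h1
    _ = (d.factorial : ℤ) * B ^ d * H ^ d := by ring
    _ ≤ _ := by
      gcongr
      exact le_add_of_nonneg_right zero_le_one
theorem pairs_count {V Z : Type*} [Fintype V] [Fintype Z] [DecidableEq V] [DecidableEq Z]
    (g : V → Z) :
    (Fintype.card V) ^ 2 ≤ Fintype.card Z *
      (Finset.univ.filter (fun x : V × V => g x.1 = g x.2)).card := by
  have h1 : (Finset.univ.filter (fun x : V × V => g x.1 = g x.2)).card =
      ∑ z : Z, ((Finset.univ.filter (fun v => g v = z)).card) ^ 2 := by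
    rw [Finset.card_eq_sum_card_fiberwise (f := fun x : V × V => g x.1) (t := Finset.univ)
      (fun _ _ => Finset.mem_coe.mpr (Finset.mem_univ _))]
    refine Finset.sum_congr rfl fun z _ => ?_
    rw [sq, ← Finset.card_product]
    congr 1
    ext ⟨v, w⟩
    simp only [Finset.mem_filter, Finset.mem_univ, true_and, Finset.mem_product]
    constructor
    · rintro ⟨h, rfl⟩; exact ⟨rfl, h.symm⟩
    · rintro ⟨rfl, h⟩; exact ⟨h.symm, rfl⟩
  have h2 : Fintype.card V = ∑ z : Z, (Finset.univ.filter (fun v => g v = z)).card := by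
    rw [← Finset.card_univ]
    exact Finset.card_eq_sum_card_fiberwise (fun _ _ => Finset.mem_coe.mpr (Finset.mem_univ _))
  rw [h1, h2]
  exact sq_sum_le_card_mul_sum_sq

theorem landau_upper {R : Type*} [CommRing R] [IsDomain R] {d : ℕ}
    (b : Module.Basis (Fin d) ℤ R) :
    ∃ C : ℝ, 0 ≤ C ∧ ∀ H : ℕ, 0 < H → ∀ T : Finset ℕ, (∀ q ∈ T, q.Prime) →
      ∀ Φ : (q : ℕ) → Finset (R →+* ZMod q),
        ∑ q ∈ T, ((Φ q).card : ℝ) * (Real.log q * (1 / q - 1 / (H : ℝ) ^ d)) ≤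
          d * Real.log H + C := by
  classical
  have : Module.Free ℤ R := Module.Free.of_basis b
  have : Module.Finite ℤ R := Module.Finite.of_basis b
  obtain ⟨M, hM, hb⟩ := norm_bound b
  refine ⟨Real.log M, Real.log_natCast_nonneg M, fun H hH T hT Φ => ?_⟩
  let e : (Fin d → Fin H) → R := fun v => ∑ i, ((v i : ℕ) : ℤ) • b i
  have he : ∀ v w, e v = e w → v = w := by
    intro v w h
    have h2 := congrArg (fun x => b.repr x) h
    funext i
    have h3 := congrArg (fun x => x i) h2
    simp only [e, Module.Basis.repr_sum_self] at h3
    exact Fin.ext (by exact_mod_cast h3)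
  have hX : (0 : ℝ) < (H : ℝ) ^ d := by positivity
  set X : ℝ := (H : ℝ) ^ d with hXdef
  -- pointwise bound
  have hpt : ∀ x : (Fin d → Fin H) × (Fin d → Fin H), x.1 ≠ x.2 →
      ∑ q ∈ T, ∑ φ ∈ Φ q, (if φ (e x.1) = φ (e x.2) then Real.log q else 0) ≤
        d * Real.log H + Real.log M := by
    rintro ⟨v, w⟩ hvw
    simp only at hvw ⊢
    have hne : e v - e w ≠ 0 := fun h => hvw (he _ _ (sub_eq_zero.mp h))
    have hnorm0 : Algebra.norm ℤ (e v - e w) ≠ 0 := Algebra.norm_ne_zero_iff.mpr hne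
    let k : ℕ → ℕ := fun q => ((Φ q).filter (fun φ => φ (e v) = φ (e w))).card
    have hdvd : ∏ q ∈ T, q ^ k q ∣ (Algebra.norm ℤ (e v - e w)).natAbs := by
      refine Finset.prod_dvd_of_isRelPrime ?_ ?_
      · intro q hq q' hq' hne
        exact Nat.coprime_iff_isRelPrime.mp
          (Nat.Coprime.pow _ _ ((Nat.coprime_primes (hT q hq) (hT q' hq')).mpr hne))
      · intro q hq
        have : Fact q.Prime := ⟨hT q hq⟩
        refine pow_card_dvd_norm _ _ hne ?_
        intro φ hφ
        rw [map_sub, (Finset.mem_filter.mp hφ).2, sub_self]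
    have hle : ∏ q ∈ T, q ^ k q ≤ M * H ^ d := by
      refine (Nat.le_of_dvd (Int.natAbs_pos.mpr hnorm0) hdvd).trans ?_
      have : e v - e w = ∑ i, (((v i : ℕ) : ℤ) - ((w i : ℕ) : ℤ)) • b i := by
        simp only [e, sub_smul, Finset.sum_sub_distrib]
      rw [this]
      apply hb
      intro i
      rw [abs_le]
      have h1 := (v i).isLt
      have h2 := (w i).isLt
      constructor <;> omega
    have hsum : ∑ q ∈ T, ∑ φ ∈ Φ q, (if φ (e v) = φ (e w) then Real.log q else 0) =
        Real.log ((∏ q ∈ T, q ^ k q : ℕ) : ℝ) := by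
      push_cast
      rw [Real.log_prod]
      · refine Finset.sum_congr rfl fun q _ => ?_
        rw [← Finset.sum_filter, Finset.sum_const, nsmul_eq_mul, Real.log_pow]
      · intro q hq
        have := (hT q hq).pos
        positivity
    rw [hsum]
    have hpos : 0 < ∏ q ∈ T, q ^ k q :=
      Finset.prod_pos fun q hq => pow_pos (hT q hq).pos _
    calc Real.log ((∏ q ∈ T, q ^ k q : ℕ) : ℝ) ≤ Real.log ((M * H ^ d : ℕ) : ℝ) :=
          Real.log_le_log (by exact_mod_cast hpos) (by exact_mod_cast hle)
      _ = d * Real.log H + Real.log M := by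
          push_cast
          rw [Real.log_mul (by positivity) (by positivity), Real.log_pow]
          ring
  have hnn : 0 ≤ d * Real.log H + Real.log M :=
    add_nonneg (mul_nonneg (Nat.cast_nonneg _) (Real.log_natCast_nonneg H))
      (Real.log_natCast_nonneg M)
  let P : Finset ((Fin d → Fin H) × (Fin d → Fin H)) :=
    Finset.univ.filter (fun x => x.1 ≠ x.2)
  have hcardV : (Fintype.card (Fin d → Fin H) : ℝ) = X := by
    simp [hXdef]
  have hPcard : (P.card : ℝ) ≤ X ^ 2 := by
    have h1 : P.card ≤ Fintype.card (Fin d → Fin H) ^ 2 := by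
      calc P.card ≤ Fintype.card ((Fin d → Fin H) × (Fin d → Fin H)) := Finset.card_le_univ _
        _ = _ := by rw [Fintype.card_prod, sq]
    calc (P.card : ℝ) ≤ ((Fintype.card (Fin d → Fin H) ^ 2 : ℕ) : ℝ) := by exact_mod_cast h1
      _ = X ^ 2 := by rw [Nat.cast_pow, hcardV]
  have hup : ∑ x ∈ P, ∑ q ∈ T, ∑ φ ∈ Φ q,
      (if φ (e x.1) = φ (e x.2) then Real.log q else 0) ≤
        X ^ 2 * (d * Real.log H + Real.log M) := by
    calc _ ≤ ∑ x ∈ P, (d * Real.log H + Real.log M) :=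
          Finset.sum_le_sum fun x hx => hpt x (Finset.mem_filter.mp hx).2
      _ = P.card * (d * Real.log H + Real.log M) := by rw [Finset.sum_const, nsmul_eq_mul]
      _ ≤ _ := mul_le_mul_of_nonneg_right hPcard hnn
  have hlow : X ^ 2 * ∑ q ∈ T, ((Φ q).card : ℝ) * (Real.log q * (1 / q - 1 / X)) ≤
      ∑ x ∈ P, ∑ q ∈ T, ∑ φ ∈ Φ q, (if φ (e x.1) = φ (e x.2) then Real.log q else 0) := by
    rw [Finset.sum_comm, Finset.mul_sum]
    refine Finset.sum_le_sum fun q hq => ?_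
    have : Fact q.Prime := ⟨hT q hq⟩
    rw [Finset.sum_comm]
    calc X ^ 2 * (((Φ q).card : ℝ) * (Real.log q * (1 / q - 1 / X)))
        = ∑ φ ∈ Φ q, (Real.log q * (X ^ 2 / q - X)) := by
          rw [Finset.sum_const, nsmul_eq_mul]
          field_simp
      _ ≤ _ := by
          refine Finset.sum_le_sum fun φ _ => ?_
          rw [← Finset.sum_filter, Finset.sum_const, nsmul_eq_mul, mul_comm]
          refine mul_le_mul_of_nonneg_right ?_ (Real.log_natCast_nonneg q)
          have h1 := pairs_count (fun v : Fin d → Fin H => φ (e v))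
          rw [ZMod.card] at h1
          have h2 : (Finset.univ.filter
              (fun x : (Fin d → Fin H) × (Fin d → Fin H) => φ (e x.1) = φ (e x.2))).card ≤
              (P.filter (fun x => φ (e x.1) = φ (e x.2))).card +
                Fintype.card (Fin d → Fin H) := by
            have hsub : (Finset.univ.filter
              (fun x : (Fin d → Fin H) × (Fin d → Fin H) => φ (e x.1) = φ (e x.2))) ⊆
              (P.filter (fun x => φ (e x.1) = φ (e x.2))) ∪
                Finset.univ.image (fun v : Fin d → Fin H => (v, v)) := by
              rintro ⟨v, w⟩ h
              rw [Finset.mem_union]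
              by_cases hvw : v = w
              · right; subst hvw; simp
              · left
                simp only [Finset.mem_filter, Finset.mem_univ, true_and, P] at h ⊢
                exact ⟨hvw, h⟩
            refine (Finset.card_le_card hsub).trans ((Finset.card_union_le _ _).trans ?_)
            gcongr
            exact Finset.card_image_le.trans (le_of_eq Finset.card_univ)
          have hq0 : (0 : ℝ) < q := by exact_mod_cast (hT q hq).pos
          rw [tsub_le_iff_right, div_le_iff₀ hq0]
          have h3 : (Fintype.card (Fin d → Fin H)) ^ 2 ≤
              q * ((P.filter (fun x => φ (e x.1) = φ (e x.2))).card +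
                Fintype.card (Fin d → Fin H)) := h1.trans (Nat.mul_le_mul_left _ h2)
          have h4 : X ^ 2 ≤ q * (((P.filter (fun x => φ (e x.1) = φ (e x.2))).card : ℝ) + X) := by
            rw [← hcardV]; exact_mod_cast h3
          linarith
  have := hlow.trans hup
  exact le_of_mul_le_mul_left this (by positivity)
theorem abel_bound (p : ℕ) (hp : 2 ≤ p) (f : ℕ → ℝ) (hf0 : ∀ n, 0 ≤ f n) (C : ℝ) (hC : 0 ≤ C)
    (hf : ∀ k : ℕ, ∀ T : Finset ℕ, (∀ n ∈ T, n ≤ 2 ^ (p * k)) →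
      ∑ n ∈ T, f n ≤ k * Real.log 2 + C) :
    ∃ C' : ℝ, ∀ s : ℝ, 0 < s → s ≤ 1 → ∀ T : Finset ℕ, (∀ n ∈ T, 0 < n) →
      ∑ n ∈ T, f n * (n : ℝ) ^ (-s) ≤ 1 / (p * s) + C' := by
  classical
  set L := Real.log 2 with hL
  have hLpos : 0 < L := Real.log_pos (by norm_num)
  refine ⟨L + C * 2 ^ p, fun s hs hs1 T hT => ?_⟩
  set B : ℕ := 2 ^ p with hB
  have hB1 : 1 < B := Nat.one_lt_two_pow (by omega)
  have hBpos : (0 : ℝ) < B := by positivity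
  set r : ℝ := (B : ℝ) ^ (-s) with hr
  have hr0 : 0 < r := Real.rpow_pos_of_pos hBpos _
  have hp0 : (0 : ℝ) < p := by positivity
  set x : ℝ := s * (p * L) with hx
  have hx0 : 0 < x := by positivity
  have hrexp : r = Real.exp (-x) := by
    rw [hr, Real.rpow_def_of_pos hBpos, hB]
    push_cast
    rw [Real.log_pow, hx]
    congr 1
    ring
  have hr1 : r < 1 := by rw [hrexp, ← Real.exp_zero]; exact Real.exp_lt_exp.mpr (by linarith)
  have hone : (1 - r)⁻¹ ≤ 1 / x + 1 := by
    have h1 : r * (1 + x) ≤ 1 := by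
      have h2 := Real.add_one_le_exp x
      have h3 : r * Real.exp x = 1 := by rw [hrexp, ← Real.exp_add]; simp
      nlinarith
    have h1r : 0 < 1 - r := by linarith
    rw [inv_le_iff_one_le_mul₀ h1r]
    field_simp
    nlinarith
  let c : ℕ → ℕ := fun n => Nat.clog B n
  have hcn : ∀ n : ℕ, 0 < n → (n : ℝ) ^ (-s) ≤ r ^ (c n) / r := by
    intro n hn
    rcases Nat.eq_zero_or_pos (c n) with h0 | hpos
    · rw [h0, pow_zero]
      have h1 : (n : ℝ) ^ (-s) ≤ 1 :=
        Real.rpow_le_one_of_one_le_of_nonpos (by exact_mod_cast hn) (by linarith)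
      have h2 : 1 ≤ 1 / r := by rw [le_div_iff₀ hr0]; linarith
      linarith
    · have h1 : B ^ (c n - 1) < n := by
        by_contra hcon
        push Not at hcon
        have := Nat.clog_le_of_le_pow hcon
        have h4 : c n = Nat.clog B n := rfl
        omega
      have h2 : r ^ (c n) / r = r ^ (c n - 1) := by
        obtain ⟨m, hm⟩ : ∃ m, c n = m + 1 := ⟨c n - 1, by omega⟩
        rw [hm]; simp [pow_succ, hr0.ne']
      rw [h2, hr, ← Real.rpow_natCast, ← Real.rpow_mul hBpos.le, mul_comm,
        Real.rpow_mul hBpos.le, Real.rpow_natCast]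
      apply Real.rpow_le_rpow_of_nonpos (by positivity)
      · exact_mod_cast h1.le
      · linarith
  obtain ⟨K, hK⟩ : ∃ K, ∀ n ∈ T, c n ≤ K := ⟨T.sup c, fun n hn => Finset.le_sup hn⟩
  have hgeo : ∀ m K : ℕ, m ≤ K →
      r ^ m = (1 - r) * ∑ k ∈ Finset.range K, (if m ≤ k then r ^ k else 0) + r ^ K := by
    intro m K h
    induction K, h using Nat.le_induction with
    | base =>
      rw [Finset.sum_eq_zero]
      · simp
      · intro k hk
        rw [if_neg (by simpa using hk)]
    | succ K hmK ih =>
      rw [Finset.sum_range_succ, if_pos hmK]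
      rw [ih]; ring
  have hg : ∀ K : ℕ, (1 - r) * ∑ k ∈ Finset.range K, r ^ k * (k * L + C) + r ^ K * (K * L + C) =
      C + L * r * (1 - r ^ K) * (1 - r)⁻¹ := by
    have h1r : 1 - r ≠ 0 := by linarith
    intro K
    induction K with
    | zero => simp
    | succ K ih =>
      rw [Finset.sum_range_succ, mul_add]
      have : (1 - r) * ∑ k ∈ Finset.range K, r ^ k * (k * L + C) =
        C + L * r * (1 - r ^ K) * (1 - r)⁻¹ - r ^ K * (K * L + C) := by linarith
      rw [this]
      push_cast
      field_simp
      ring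
  have hSk : ∀ k : ℕ, ∑ n ∈ T.filter (fun n => c n ≤ k), f n ≤ k * L + C := by
    intro k
    apply hf
    intro n hn
    have h1 := (Finset.mem_filter.mp hn).2
    calc n ≤ B ^ (c n) := Nat.le_pow_clog hB1 n
      _ ≤ B ^ k := Nat.pow_le_pow_right (by omega) h1
      _ = 2 ^ (p * k) := by rw [hB, pow_mul]
  have hmain : ∑ n ∈ T, f n * r ^ (c n) ≤ C + L * r * (1 - r)⁻¹ := by
    calc ∑ n ∈ T, f n * r ^ (c n)
        = ∑ n ∈ T, f n * ((1 - r) * ∑ k ∈ Finset.range K, (if c n ≤ k then r ^ k else 0) + r ^ K) :=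
          Finset.sum_congr rfl fun n hn => by rw [← hgeo _ _ (hK n hn)]
      _ = (1 - r) * ∑ k ∈ Finset.range K, r ^ k * ∑ n ∈ T.filter (fun n => c n ≤ k), f n +
            r ^ K * ∑ n ∈ T.filter (fun n => c n ≤ K), f n := by
          rw [Finset.filter_true_of_mem (fun n hn => hK n hn)]
          simp only [mul_add, Finset.sum_add_distrib]
          congr 1
          · simp only [Finset.mul_sum, Finset.sum_filter]
            rw [Finset.sum_comm]
            refine Finset.sum_congr rfl fun k _ => Finset.sum_congr rfl fun n _ => ?_
            split_ifs <;> ring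
          · rw [Finset.mul_sum]
            exact Finset.sum_congr rfl fun n _ => by ring
      _ ≤ (1 - r) * ∑ k ∈ Finset.range K, r ^ k * (k * L + C) + r ^ K * (K * L + C) := by
          refine add_le_add (mul_le_mul_of_nonneg_left (Finset.sum_le_sum fun k _ => ?_)
            (by linarith)) ?_
          · exact mul_le_mul_of_nonneg_left (hSk k) (by positivity)
          · exact mul_le_mul_of_nonneg_left (hSk K) (by positivity)
      _ = C + L * r * (1 - r ^ K) * (1 - r)⁻¹ := hg K
      _ ≤ C + L * r * (1 - r)⁻¹ := by
          have h1r : 0 < (1 - r)⁻¹ := inv_pos.mpr (by linarith)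
          have : 0 ≤ L * r * r ^ K * (1 - r)⁻¹ := by positivity
          nlinarith
  have hrB : 1 / r ≤ 2 ^ p := by
    rw [hr, Real.rpow_neg hBpos.le, one_div, inv_inv]
    calc (B : ℝ) ^ s ≤ (B : ℝ) ^ (1 : ℝ) :=
          Real.rpow_le_rpow_of_exponent_le (by exact_mod_cast hB1.le) hs1
      _ = 2 ^ p := by rw [Real.rpow_one, hB]; push_cast; rfl
  calc ∑ n ∈ T, f n * (n : ℝ) ^ (-s) ≤ ∑ n ∈ T, f n * (r ^ (c n) / r) :=
        Finset.sum_le_sum fun n hn => mul_le_mul_of_nonneg_left (hcn n (hT n hn)) (hf0 n)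
    _ = (∑ n ∈ T, f n * r ^ (c n)) * (1 / r) := by
        rw [Finset.sum_mul]
        exact Finset.sum_congr rfl fun n _ => by ring
    _ ≤ (C + L * r * (1 - r)⁻¹) * (1 / r) :=
        mul_le_mul_of_nonneg_right hmain (by positivity)
    _ = C * (1 / r) + L * (1 - r)⁻¹ := by field_simp
    _ ≤ C * 2 ^ p + L * (1 / x + 1) := by
        gcongr
    _ = 1 / (p * s) + (L + C * 2 ^ p) := by
        rw [hx]; field_simp; ring
theorem density_contra (p : ℕ) (hp : p.Prime) (B : ℕ) (C' : ℝ)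
    (h : ∀ s : ℝ, 0 < s → s ≤ 1 → ∀ T : Finset ℕ,
      (∀ q ∈ T, q.Prime ∧ B < q ∧ (q : ZMod p) = 1) →
      ∑ q ∈ T, Real.log q / q * (q : ℝ) ^ (-s) ≤ 1 / (p * s) + C') : False := by
  classical
  have : NeZero p := ⟨hp.ne_zero⟩
  obtain ⟨C, hC⟩ := ArithmeticFunction.vonMangoldt.LSeries_residueClass_lower_bound
    (q := p) (a := 1) isUnit_one
  set rc := ArithmeticFunction.vonMangoldt.residueClass (1 : ZMod p) with hrc
  have hrc0 : ∀ n, 0 ≤ rc n := ArithmeticFunction.vonMangoldt.residueClass_nonneg _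
  have hsum := ArithmeticFunction.vonMangoldt.summable_residueClass_non_primes_div (1 : ZMod p)
  rw [← hrc] at hsum
  set G := ∑' n : ℕ, (if n.Prime then 0 else rc n) / (n : ℝ) with hG
  set E := ∑ n ∈ Finset.range (B + 1), rc n with hE
  have hup : ∀ s : ℝ, 0 < s → s ≤ 1 →
      ∑' n : ℕ, rc n / (n : ℝ) ^ (1 + s) ≤ 1 / (p * s) + C' + G + E := by
    intro s hs hs1
    apply Real.tsum_le_of_sum_le
    · intro n
      exact div_nonneg (hrc0 n) (by positivity)
    · intro T
      let g : ℕ → ℝ := fun n => if n.Prime ∧ B < n ∧ (n : ZMod p) = 1 then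
        Real.log n / n * (n : ℝ) ^ (-s) else 0
      have hterm : ∀ n : ℕ, rc n / (n : ℝ) ^ (1 + s) ≤ g n +
          (if n.Prime then 0 else rc n) / (n : ℝ) + (if n < B + 1 then rc n else 0) := by
        intro n
        have hg0 : 0 ≤ g n := by
          simp only [g]
          split_ifs
          · exact mul_nonneg (div_nonneg (Real.log_natCast_nonneg n) (Nat.cast_nonneg _))
              (by positivity)
          · exact le_rfl
        have h20 : 0 ≤ (if n.Prime then 0 else rc n) / (n : ℝ) := by
          apply div_nonneg _ (Nat.cast_nonneg _)
          split_ifs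
          · exact le_rfl
          · exact hrc0 n
        have h30 : 0 ≤ (if n < B + 1 then rc n else 0) := by
          split_ifs
          · exact hrc0 n
          · exact le_rfl
        rcases Nat.eq_zero_or_pos n with rfl | hn
        · have : rc 0 = 0 := ArithmeticFunction.vonMangoldt.residueClass_apply_zero _
          rw [this, zero_div]
          positivity
        have hn1 : (1 : ℝ) ≤ n := by exact_mod_cast hn
        have hn0 : (0 : ℝ) < n := by linarith
        by_cases hpr : n.Prime
        · by_cases hnB : n < B + 1
          · rw [if_pos hnB] at h30 ⊢
            have : rc n / (n : ℝ) ^ (1 + s) ≤ rc n :=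
              div_le_self (hrc0 n) (Real.one_le_rpow hn1 (by linarith))
            linarith
          · by_cases hcl : (n : ZMod p) = 1
            · have h4 : g n = rc n / (n : ℝ) ^ (1 + s) := by
                simp only [g]
                rw [if_pos ⟨hpr, by omega, hcl⟩]
                have : rc n = Real.log n := by
                  rw [hrc, ArithmeticFunction.vonMangoldt.residueClass,
                    Set.indicator_of_mem (by exact hcl),
                    ArithmeticFunction.vonMangoldt_apply_prime hpr]
                rw [this, Real.rpow_add hn0, Real.rpow_one, Real.rpow_neg hn0.le]
                field_simp
              linarith
            · have : rc n = 0 := by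
                rw [hrc, ArithmeticFunction.vonMangoldt.residueClass,
                    Set.indicator_of_notMem (by exact hcl)]
              rw [this, zero_div]
              rw [this] at h20 h30
              linarith
        · rw [if_neg hpr] at h20 ⊢
          have : rc n / (n : ℝ) ^ (1 + s) ≤ rc n / n := by
            apply div_le_div_of_nonneg_left (hrc0 n) hn0
            calc (n : ℝ) = (n : ℝ) ^ (1 : ℝ) := (Real.rpow_one _).symm
              _ ≤ _ := Real.rpow_le_rpow_of_exponent_le hn1 (by linarith)
          linarith
      calc ∑ n ∈ T, rc n / (n : ℝ) ^ (1 + s)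
          ≤ ∑ n ∈ T, (g n + (if n.Prime then 0 else rc n) / (n : ℝ) +
            (if n < B + 1 then rc n else 0)) := Finset.sum_le_sum fun n _ => hterm n
        _ = ∑ n ∈ T, g n + ∑ n ∈ T, (if n.Prime then 0 else rc n) / (n : ℝ) +
            ∑ n ∈ T, (if n < B + 1 then rc n else 0) := by
            rw [Finset.sum_add_distrib, Finset.sum_add_distrib]
        _ ≤ (1 / (p * s) + C') + G + E := by
            refine add_le_add (add_le_add ?_ ?_) ?_
            · simp only [g]
              rw [← Finset.sum_filter]
              exact h s hs hs1 _ (fun q hq => (Finset.mem_filter.mp hq).2)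
            · refine hsum.sum_le_tsum _ (fun n _ => ?_)
              apply div_nonneg _ (Nat.cast_nonneg _)
              split_ifs
              · exact le_rfl
              · exact hrc0 n
            · rw [← Finset.sum_filter]
              refine Finset.sum_le_sum_of_subset_of_nonneg ?_ (fun n _ _ => hrc0 n)
              intro n hn
              exact Finset.mem_range.mpr (Finset.mem_filter.mp hn).2
  have hp2 : (2 : ℝ) ≤ p := by exact_mod_cast hp.two_le
  have htot : ((p.totient : ℕ) : ℝ) = p - 1 := by
    rw [Nat.totient_prime hp, Nat.cast_sub hp.one_le, Nat.cast_one]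
  have key : ∀ s : ℝ, 0 < s → s ≤ 1 → 1 ≤ (p * (p - 1)) * (C' + G + E + C) * s := by
    intro s hs hs1
    have h1 := hC (x := 1 + s) ⟨by linarith, by linarith⟩
    have h2 := hup s hs hs1
    rw [htot, add_sub_cancel_left] at h1
    have h3 : ((p : ℝ) - 1)⁻¹ / s - C ≤ 1 / (p * s) + C' + G + E := h1.trans h2
    have h4 : ((p : ℝ) - 1)⁻¹ / s - 1 / (p * s) = 1 / (p * (p - 1)) / s := by
      have : (p : ℝ) - 1 ≠ 0 := by linarith
      field_simp
      ring
    have h5 : 1 / (p * ((p : ℝ) - 1)) / s ≤ C' + G + E + C := by linarith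
    rw [div_div, div_le_iff₀ (by apply mul_pos (mul_pos _ _) hs <;> linarith)] at h5
    linarith
  set A : ℝ := (p * (p - 1)) * (C' + G + E + C) with hA
  have hA1 := key 1 one_pos le_rfl
  have hApos : 0 < A := by linarith
  have := key (1 / (2 * A)) (by positivity) (by
    rw [div_le_one (by positivity)]; linarith)
  rw [mul_one_div, div_eq_mul_inv, mul_inv] at this
  have h6 : A * (2⁻¹ * A⁻¹) = 1 / 2 := by field_simp
  linarith
theorem pth_roots_card (p q : ℕ) (hp : p.Prime) [Fact q.Prime] (hq : (q : ZMod p) = 1) (N : ZMod q)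
    (hN : N ≠ 0) (z : ZMod q) (hz : z ^ p = N) :
    ∃ s : Finset (ZMod q), s.card = p ∧ ∀ x ∈ s, x ^ p = N := by
  classical
  have hqp := (Fact.out : q.Prime)
  have hdiv : p ∣ q - 1 := by
    have h1 : ((q - 1 : ℕ) : ZMod p) = 0 := by
      rw [Nat.cast_sub hqp.one_le]; simp [hq]
    exact (ZMod.natCast_eq_zero_iff _ _).1 h1
  have hcard : Fintype.card (ZMod q)ˣ = q - 1 := ZMod.card_units q
  obtain ⟨g, hg⟩ : ∃ g : (ZMod q)ˣ, orderOf g = p := by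
    have := Fact.mk hp
    apply exists_prime_orderOf_dvd_card p
    rw [hcard]; exact hdiv
  have hprim : IsPrimitiveRoot (g : ZMod q) p := by
    rw [IsPrimitiveRoot.coe_units_iff, ← hg]; exact IsPrimitiveRoot.orderOf g
  have hz0 : z ≠ 0 := by
    rintro rfl; rw [zero_pow hp.ne_zero] at hz; exact hN hz.symm
  refine ⟨(Finset.range p).image (fun i => (g : ZMod q) ^ i * z), ?_, ?_⟩
  · rw [Finset.card_image_of_injOn, Finset.card_range]
    intro i hi j hj hij
    have : (g : ZMod q) ^ i = (g : ZMod q) ^ j := mul_right_cancel₀ hz0 hij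
    exact hprim.pow_inj (by simpa using hi) (by simpa using hj) this
  · intro x hx
    obtain ⟨i, _, rfl⟩ := Finset.mem_image.1 hx
    rw [mul_pow, ← pow_mul, mul_comm i p, pow_mul, hprim.pow_eq_one, one_pow, one_mul, hz]

open Polynomial in
theorem irr_int (p : ℕ) (hp : p.Prime) (N : ℤ) (h : ∀ z : ℤ, z ^ p ≠ N) :
    Irreducible (X ^ p - C N : ℤ[X]) := by
  have hm : (X ^ p - C N : ℤ[X]).Monic := monic_X_pow_sub_C N hp.ne_zero
  rw [hm.irreducible_iff_irreducible_map_fraction_map (K := ℚ)]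
  have : (X ^ p - C N : ℤ[X]).map (algebraMap ℤ ℚ) = X ^ p - C (N : ℚ) := by simp
  rw [this]
  apply X_pow_sub_C_irreducible_of_prime hp
  intro b hb
  have hIntegral : IsIntegral ℤ b := by
    refine ⟨X ^ p - C N, hm, ?_⟩
    rw [eval₂_sub, eval₂_pow, eval₂_X, eval₂_C, hb]; simp
  obtain ⟨z, hz⟩ := IsIntegrallyClosed.isIntegral_iff.1 hIntegral
  apply h z
  have : ((z : ℤ) : ℚ) = b := by simpa using hz
  rw [← this] at hb
  exact_mod_cast hb

open Polynomial in
theorem lemmaB (p : ℕ) (hp : p.Prime) (N : ℤ) (h : ∀ z : ℤ, z ^ p ≠ N) (B0 : ℕ) :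
    ∃ q : ℕ, q.Prime ∧ B0 < q ∧ ∀ z : ZMod q, z ^ p ≠ (N : ZMod q) := by
  classical
  by_contra hcon
  push Not at hcon
  set B := max B0 N.natAbs with hB
  have hN0 : N ≠ 0 := by rintro rfl; exact h 0 (zero_pow hp.ne_zero)
  have hirr := irr_int p hp N h
  have hm : (X ^ p - C N : ℤ[X]).Monic := monic_X_pow_sub_C N hp.ne_zero
  have : IsDomain (AdjoinRoot (X ^ p - C N : ℤ[X])) := AdjoinRoot.isDomain_of_prime hirr.prime
  have hdim : (AdjoinRoot.powerBasis' hm).dim = p := by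
    rw [AdjoinRoot.powerBasis'_dim, natDegree_X_pow_sub_C]
  let b : Module.Basis (Fin p) ℤ (AdjoinRoot (X ^ p - C N : ℤ[X])) :=
    (AdjoinRoot.powerBasis' hm).basis.reindex (finCongr hdim)
  obtain ⟨C0, hC0, hland⟩ := landau_upper b
  have hΦ : ∀ q : ℕ, ∃ F : Finset (AdjoinRoot (X ^ p - C N : ℤ[X]) →+* ZMod q),
      (q.Prime → B < q → (q : ZMod p) = 1 → F.card = p) := by
    intro q
    by_cases hq : q.Prime ∧ B < q ∧ (q : ZMod p) = 1
    · obtain ⟨hq1, hq2, hq3⟩ := hq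
      have := Fact.mk hq1
      obtain ⟨z, hz⟩ := hcon q hq1 (lt_of_le_of_lt (le_max_left _ _) hq2)
      have hNq : (N : ZMod q) ≠ 0 := by
        intro h0
        rw [ZMod.intCast_zmod_eq_zero_iff_dvd] at h0
        have := Int.natAbs_dvd_natAbs.2 h0
        have h2 := Nat.le_of_dvd (Int.natAbs_pos.2 hN0) this
        simp only [Int.natAbs_natCast] at h2
        have := le_max_right B0 N.natAbs
        omega
      obtain ⟨s, hs1, hs2⟩ := pth_roots_card p q hp hq3 _ hNq z hz
      refine ⟨s.attach.image (fun x => AdjoinRoot.lift (Int.castRingHom (ZMod q)) x.1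
        (by rw [eval₂_sub, eval₂_pow, eval₂_X, eval₂_C, hs2 x.1 x.2]; simp)), fun _ _ _ => ?_⟩
      rw [Finset.card_image_of_injective, Finset.card_attach, hs1]
      intro x y hxy
      have := congrArg (fun f => f (AdjoinRoot.root _)) hxy
      simp only [AdjoinRoot.lift_root] at this
      exact Subtype.ext this
    · exact ⟨∅, fun h1 h2 h3 => absurd ⟨h1, h2, h3⟩ hq⟩
  choose Φ hΦ using hΦ
  let f : ℕ → ℝ := fun q => if q.Prime ∧ B < q ∧ (q : ZMod p) = 1 then Real.log q / q else 0
  have hf0 : ∀ n, 0 ≤ f n := by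
    intro n; simp only [f]; split_ifs
    · positivity
    · exact le_rfl
  have hp0 : (0:ℝ) < p := by exact_mod_cast hp.pos
  have hf : ∀ k : ℕ, ∀ T : Finset ℕ, (∀ n ∈ T, n ≤ 2 ^ (p * k)) →
      ∑ n ∈ T, f n ≤ k * Real.log 2 + (C0 / p + Real.log 4) := by
    intro k T hT
    set T' := T.filter (fun q => q.Prime ∧ B < q ∧ (q : ZMod p) = 1) with hT'
    have e1 : ∑ n ∈ T, f n = ∑ q ∈ T', Real.log q / q := by
      rw [hT', Finset.sum_filter]
    have hl := hland (2 ^ k) (by positivity) T' (fun q hq => (Finset.mem_filter.1 hq).2.1) Φ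
    have e2 : ∑ q ∈ T', ((Φ q).card:ℝ) * (Real.log q * (1/q - 1/((2 ^ k : ℕ):ℝ)^p)) =
        p * (∑ q ∈ T', Real.log q / q - (∑ q ∈ T', Real.log q) / 2 ^ (p * k)) := by
      rw [Finset.sum_div, ← Finset.sum_sub_distrib, Finset.mul_sum]
      apply Finset.sum_congr rfl
      intro q hq
      obtain ⟨h1, h2, h3⟩ := (Finset.mem_filter.1 hq).2
      rw [hΦ q h1 h2 h3]
      push_cast
      rw [← pow_mul, mul_comm k p]
      ring
    rw [e2] at hl
    have e3 : ∑ q ∈ T', Real.log q ≤ Real.log 4 * 2 ^ (p * k) := by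
      refine le_trans ?_ (Chebyshev.theta_le_log4_mul_x (x := 2 ^ (p * k)) (by positivity))
      unfold Chebyshev.theta
      apply Finset.sum_le_sum_of_subset_of_nonneg
      · intro q hq
        obtain ⟨hq0, h1, h2, h3⟩ := Finset.mem_filter.1 hq
        simp only [Finset.mem_filter, Finset.mem_Ioc]
        refine ⟨⟨h1.pos, ?_⟩, h1⟩
        apply Nat.le_floor
        exact_mod_cast hT q hq0
      · intro i _ _; exact Real.log_natCast_nonneg i
    have e4 : (∑ q ∈ T', Real.log q) / 2 ^ (p * k) ≤ Real.log 4 := by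
      rw [div_le_iff₀ (by positivity)]; exact e3
    have e5 : Real.log ((2 ^ k : ℕ) : ℝ) = k * Real.log 2 := by
      push_cast; rw [Real.log_pow]
    rw [e5] at hl
    rw [e1]
    have e6 : ∑ q ∈ T', Real.log q / q - (∑ q ∈ T', Real.log q) / 2 ^ (p * k)
        ≤ k * Real.log 2 + C0 / p := by
      rw [← mul_le_mul_iff_right₀ hp0]
      refine hl.trans (le_of_eq ?_)
      field_simp
    linarith
  obtain ⟨C', hC'⟩ := abel_bound p hp.two_le f hf0 _
    (add_nonneg (div_nonneg hC0 hp0.le) (Real.log_nonneg (by norm_num))) hf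
  refine density_contra p hp B C' ?_
  intro s hs hs1 T hT
  refine le_trans (le_of_eq ?_) (hC' s hs hs1 T (fun n hn => (hT n hn).1.pos))
  apply Finset.sum_congr rfl
  intro q hq
  simp only [f, if_pos (hT q hq)]
theorem not_pth_power (p : ℕ) (s a b c d : ℕ) (z : ℤ)
    (hz : z ^ p = (-1) ^ s * 2 ^ a * 3 ^ b * 5 ^ c * 7 ^ d) : p ∣ a ∧ p ∣ b ∧ p ∣ c ∧ p ∣ d := by
  have h1 : z.natAbs ^ p = 2 ^ a * 3 ^ b * 5 ^ c * 7 ^ d := by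
    have := congrArg Int.natAbs hz
    simpa [Int.natAbs_mul, Int.natAbs_pow] using this
  have key : ∀ r : ℕ, p * z.natAbs.factorization r =
      (2 ^ a * 3 ^ b * 5 ^ c * 7 ^ d).factorization r := by
    intro r; rw [← h1]; simp
  have e : ∀ r : ℕ, (2 ^ a * 3 ^ b * 5 ^ c * 7 ^ d).factorization r =
      a * (Nat.factorization 2 r) + b * (Nat.factorization 3 r) + c * (Nat.factorization 5 r) +
        d * (Nat.factorization 7 r) := by
    intro r
    rw [Nat.factorization_mul (by positivity) (by positivity),
      Nat.factorization_mul (by positivity) (by positivity),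
      Nat.factorization_mul (by positivity) (by positivity)]
    simp
  have p2 := Nat.prime_two
  have p3 := Nat.prime_three
  have p5 := Nat.prime_five
  have p7 : Nat.Prime 7 := by norm_num
  have k2 := key 2
  have k3 := key 3
  have k5 := key 5
  have k7 := key 7
  rw [e] at k2 k3 k5 k7
  simp [p2.factorization, p3.factorization, p5.factorization, p7.factorization] at k2 k3 k5 k7
  exact ⟨⟨_, k2.symm⟩, ⟨_, k3.symm⟩, ⟨_, k5.symm⟩, ⟨_, k7.symm⟩⟩

theorem lemmaF (n : ℕ) (hn : 1 < n) : ∃ Q0 : Finset ℕ, (∀ q ∈ Q0, q.Prime ∧ 7 < q) ∧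
    ∀ p : ℕ, p.Prime → p ∣ n → ∀ s a b c d : ℕ,
      (∀ q ∈ Q0, ∃ z : ZMod q, z ^ p = (-1) ^ s * 2 ^ a * 3 ^ b * 5 ^ c * 7 ^ d) →
      p ∣ a ∧ p ∣ b ∧ p ∣ c ∧ p ∣ d := by
  classical
  have hex : ∀ t : ℕ × ℕ × ℕ × ℕ × ℕ × ℕ, ∃ q : ℕ, q.Prime ∧ 7 < q ∧ (t.1.Prime →
      (∀ z : ℤ, z ^ t.1 ≠ (-1) ^ t.2.1 * 2 ^ t.2.2.1 * 3 ^ t.2.2.2.1 * 5 ^ t.2.2.2.2.1 *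
        7 ^ t.2.2.2.2.2) → ∀ z : ZMod q,
        z ^ t.1 ≠ (-1) ^ t.2.1 * 2 ^ t.2.2.1 * 3 ^ t.2.2.2.1 * 5 ^ t.2.2.2.2.1 *
        7 ^ t.2.2.2.2.2) := by
    intro t
    by_cases h : t.1.Prime ∧ (∀ z : ℤ, z ^ t.1 ≠ (-1) ^ t.2.1 * 2 ^ t.2.2.1 * 3 ^ t.2.2.2.1 *
        5 ^ t.2.2.2.2.1 * 7 ^ t.2.2.2.2.2)
    · obtain ⟨q, h1, h2, h3⟩ := lemmaB t.1 h.1 _ h.2 7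
      refine ⟨q, h1, h2, fun _ _ z => ?_⟩
      have := h3 z
      push_cast at this
      exact this
    · exact ⟨11, by norm_num, by norm_num, fun h1 h2 => absurd ⟨h1, h2⟩ h⟩
  choose Q hQ using hex
  refine ⟨(Finset.range (n+1) ×ˢ Finset.range 2 ×ˢ Finset.range (n+1) ×ˢ Finset.range (n+1) ×ˢ
    Finset.range (n+1) ×ˢ Finset.range (n+1)).image Q, ?_, ?_⟩
  · intro q hq
    obtain ⟨t, _, rfl⟩ := Finset.mem_image.1 hq
    exact ⟨(hQ t).1, (hQ t).2.1⟩
  · intro p hp hpn s a b c d h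
    have hle := Nat.le_of_dvd (by omega) hpn
    have hlt : ∀ a, a % p < n + 1 := fun a => by
      have := Nat.mod_lt a hp.pos
      omega
    by_contra hcon
    have hnp : ∀ z : ℤ, z ^ p ≠ (-1) ^ (s % 2) * 2 ^ (a % p) * 3 ^ (b % p) * 5 ^ (c % p) *
        7 ^ (d % p) := by
      intro z hz
      have := not_pth_power p _ _ _ _ _ z hz
      simp only [Nat.dvd_mod_iff dvd_rfl] at this
      exact hcon this
    have hq := hQ (p, s % 2, a % p, b % p, c % p, d % p)
    set q := Q (p, s % 2, a % p, b % p, c % p, d % p) with hqdef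
    obtain ⟨hq1, hq2, hq3⟩ := hq
    have hq3 := hq3 hp hnp
    obtain ⟨z, hz⟩ := h q (by
      rw [hqdef]
      apply Finset.mem_image_of_mem
      simp only [Finset.mem_product, Finset.mem_range]
      exact ⟨by omega, Nat.mod_lt _ (by norm_num), hlt _, hlt _, hlt _, hlt _⟩)
    have := Fact.mk hq1
    have hne : ∀ r : ℕ, 0 < r → r ≤ 7 → (r : ZMod q) ≠ 0 := by
      intro r hr0 hr h0
      rw [ZMod.natCast_eq_zero_iff] at h0
      have := Nat.le_of_dvd hr0 h0
      omega
    have h2 := hne 2 (by norm_num) (by norm_num)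
    have h3 := hne 3 (by norm_num) (by norm_num)
    have h5 := hne 5 (by norm_num) (by norm_num)
    have h7 := hne 7 (by norm_num) (by norm_num)
    push_cast at h2 h3 h5 h7
    apply hq3 (z / (2 ^ (a / p) * 3 ^ (b / p) * 5 ^ (c / p) * 7 ^ (d / p)))
    rw [div_pow, div_eq_iff (by positivity), hz, neg_one_pow_eq_pow_mod_two]
    have ex : ∀ (r : ZMod q) (a : ℕ), r ^ a = r ^ (a % p) * (r ^ (a / p)) ^ p := by
      intro r a
      rw [← pow_mul, ← pow_add, mul_comm, Nat.mod_add_div]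
    rw [ex 2 a, ex 3 b, ex 5 c, ex 7 d]
    ring
theorem group_rank (M : Type*) [CommGroup M] (n : ℕ) (hn : 1 < n) (c : Fin 3 → M)
    (hc : ∀ i, c i ^ n = 1)
    (h : ∀ p : ℕ, p.Prime → p ∣ n → ∀ f : Fin 3 → ℕ, (∀ i, f i < p) →
      ∏ i, c i ^ ((n / p) * f i) = 1 → ∀ i, f i = 0) :
    ∃ φ : (Multiplicative (Fin 3 → ZMod n)) →* M, Function.Injective φ := by
  have : NeZero n := ⟨by omega⟩
  have hpm : ∀ i k, c i ^ (k % n) = c i ^ k := by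
    intro i k
    conv_rhs => rw [← Nat.mod_add_div k n, pow_add, pow_mul, hc, one_pow, mul_one]
  let φ : (Multiplicative (Fin 3 → ZMod n)) →* M :=
    { toFun := fun v => ∏ i, c i ^ ((Multiplicative.toAdd v) i).val
      map_one' := by simp
      map_mul' := by
        intro v w
        rw [← Finset.prod_mul_distrib]
        apply Finset.prod_congr rfl
        intro i _
        rw [toAdd_mul, Pi.add_apply, ZMod.val_add, hpm, pow_add] }
  refine ⟨φ, ?_⟩
  rw [injective_iff_map_eq_one]
  intro v hv
  by_contra hv1
  have hvn : v ^ n = 1 := by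
    apply Multiplicative.toAdd.injective
    rw [toAdd_pow]
    funext i
    simp
  have ho1 : orderOf v ≠ 1 := by rwa [Ne, orderOf_eq_one_iff]
  obtain ⟨p, hp, hpo⟩ := Nat.exists_prime_and_dvd ho1
  have hon : orderOf v ∣ n := orderOf_dvd_of_pow_eq_one hvn
  have ho0 : 0 < orderOf v := Nat.pos_of_dvd_of_pos hon (by omega)
  obtain ⟨m, hm⟩ := hpo
  have hm0 : 0 < m := by
    rcases Nat.eq_zero_or_pos m with h0 | h0
    · rw [h0, mul_zero] at hm; omega
    · exact h0
  set w := v ^ m with hw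
  have hw1 : w ≠ 1 := by
    intro h1
    have := orderOf_dvd_of_pow_eq_one h1
    have h2 := Nat.le_of_dvd hm0 this
    rw [hm] at h2
    have := hp.two_le
    nlinarith
  have hwp : w ^ p = 1 := by rw [hw, ← pow_mul, mul_comm, ← hm, pow_orderOf_eq_one]
  have hφw : φ w = 1 := by rw [hw, map_pow, hv, one_pow]
  have hpn : p ∣ n := dvd_trans ⟨m, hm⟩ hon
  obtain ⟨l, hl⟩ := hpn
  have hnp : n / p = l := by rw [hl, Nat.mul_div_cancel_left _ hp.pos]
  have hd : ∀ i, l ∣ ((Multiplicative.toAdd w) i).val := by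
    intro i
    have h1 : (p : ZMod n) * (Multiplicative.toAdd w) i = 0 := by
      have := congrFun (congrArg Multiplicative.toAdd hwp) i
      rw [toAdd_pow] at this
      simpa using this
    have h2 : ((p * ((Multiplicative.toAdd w) i).val : ℕ) : ZMod n) = 0 := by
      push_cast
      rw [ZMod.natCast_zmod_val]; exact h1
    rw [ZMod.natCast_eq_zero_iff] at h2
    nth_rewrite 1 [hl] at h2
    exact Nat.dvd_of_mul_dvd_mul_left hp.pos h2
  choose f hf using hd
  have hl0 : 0 < l := by
    rcases Nat.eq_zero_or_pos l with h0 | h0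
    · rw [h0, mul_zero] at hl; omega
    · exact h0
  have hfp : ∀ i, f i < p := by
    intro i
    have h1 := ZMod.val_lt ((Multiplicative.toAdd w) i)
    rw [hf i] at h1
    by_contra hge
    push Not at hge
    have : l * p ≤ l * f i := Nat.mul_le_mul_left _ hge
    rw [mul_comm] at hl
    omega
  have hz := h p hp ⟨l, hl⟩ f hfp (by
    rw [hnp]
    rw [← hφw]
    change _ = ∏ i, c i ^ ((Multiplicative.toAdd w) i).val
    apply Finset.prod_congr rfl
    intro i _
    rw [hf i])
  apply hw1
  apply Multiplicative.toAdd.injective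
  funext i
  have := hf i
  rw [hz i, mul_zero] at this
  simpa using (ZMod.val_eq_zero _).1 this
section polys
open Polynomial

/-- The integral quartic. -/
noncomputable def FZ (m : ℤ) : ℤ[X] := X ^ 4 + C (2 * m) * X ^ 3 + C 2 * X ^ 2 - C (2 * m) * X + 1

/-- The rational quartic. -/
noncomputable def FQ (m : ℤ) : ℚ[X] := X ^ 4 + C (2 * m : ℚ) * X ^ 3 + C 2 * X ^ 2 - C (2 * m : ℚ) * X + 1

theorem FZ_map (m : ℤ) : (FZ m).map (algebraMap ℤ ℚ) = FQ m := by
  simp only [FZ, FQ, Polynomial.map_add, Polynomial.map_sub, Polynomial.map_mul, Polynomial.map_pow,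
    Polynomial.map_X, Polynomial.map_C, Polynomial.map_one]
  simp only [eq_intCast]
  push_cast
  rfl

theorem FZ_natDegree (m : ℤ) : (FZ m).natDegree = 4 := by
  unfold FZ; compute_degree!

theorem FZ_monic (m : ℤ) : (FZ m).Monic := by
  unfold FZ; monicity!

theorem FQ_natDegree (m : ℤ) : (FQ m).natDegree = 4 := by
  unfold FQ; compute_degree!

theorem FQ_monic (m : ℤ) : (FQ m).Monic := by
  unfold FQ; monicity!

theorem FZ_eval (m x : ℤ) : (FZ m).eval x = x ^ 4 + 2 * m * x ^ 3 + 2 * x ^ 2 - 2 * m * x + 1 := by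
  simp [FZ]

theorem FZ_irreducible (m : ℤ) (hm : 12 ≤ m) : Irreducible (FZ m) := by
  rw [(FZ_monic m).irreducible_iff_natDegree']
  refine ⟨?_, ?_⟩
  · intro h
    have := FZ_natDegree m
    rw [h, natDegree_one] at this
    omega
  · intro f g hf hg hfg hmem
    rw [FZ_natDegree] at hmem
    have hdeg : f.natDegree + g.natDegree = 4 := by
      rw [← hf.natDegree_mul hg, hfg, FZ_natDegree]
    have hev : ∀ x : ℤ, f.eval x * g.eval x =
        x ^ 4 + 2 * m * x ^ 3 + 2 * x ^ 2 - 2 * m * x + 1 := by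
      intro x
      rw [← FZ_eval, ← hfg, eval_mul]
    have hg12 : g.natDegree = 1 ∨ g.natDegree = 2 := by
      simp only [Finset.mem_Ioc] at hmem
      omega
    rcases hg12 with h1 | h2
    · have hgx : ∀ x : ℤ, g.eval x = x + g.coeff 0 := by
        intro x
        rw [eval_eq_sum_range, h1]
        have : g.coeff 1 = 1 := by rw [← h1]; exact hg
        simp [Finset.sum_range_succ, this]
        ring
      set r := g.coeff 0
      have h3 := hev (-r)
      rw [hgx] at h3
      have h4 : (-r) * ((-r) ^ 3 + 2 * m * (-r) ^ 2 + 2 * (-r) - 2 * m) = -1 := by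
        linear_combination -h3
      have h5 : r ∣ 1 := ⟨(-r) ^ 3 + 2 * m * (-r) ^ 2 + 2 * (-r) - 2 * m, by linear_combination h4⟩
      rcases Int.isUnit_iff.1 (isUnit_of_dvd_one h5) with h6 | h6 <;> rw [h6] at h4 <;> norm_num at h4
      · ring_nf at h4; omega
      · ring_nf at h4; omega
    · have hf2 : f.natDegree = 2 := by omega
      have hgx : ∀ x : ℤ, g.eval x = x ^ 2 + g.coeff 1 * x + g.coeff 0 := by
        intro x
        rw [eval_eq_sum_range, h2]
        have : g.coeff 2 = 1 := by rw [← h2]; exact hg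
        simp [Finset.sum_range_succ, this]
        ring
      have hfx : ∀ x : ℤ, f.eval x = x ^ 2 + f.coeff 1 * x + f.coeff 0 := by
        intro x
        rw [eval_eq_sum_range, hf2]
        have : f.coeff 2 = 1 := by rw [← hf2]; exact hf
        simp [Finset.sum_range_succ, this]
        ring
      simp only [hgx, hfx] at hev
      set b := g.coeff 1
      set c := g.coeff 0
      set d := f.coeff 1
      set e := f.coeff 0
      have e0 := hev 0
      have e1 := hev 1
      have e2 := hev (-1)
      have e3 := hev 2
      have c0 : e * c = 1 := by linear_combination e0
      have c2 : c + e + b * d = 2 := by linarith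
      have c3 : b + d = 2 * m := by linarith
      have c1 : b * e + d * c = - (2 * m) := by linarith
      rcases Int.isUnit_iff.1 (IsUnit.of_mul_eq_one _ c0) with h | h <;> rw [h] at c0 c1 c2
      · have : c = 1 := by linarith
        rw [this] at c1
        linarith
      · have hc : c = -1 := by linarith
        rw [hc] at c2
        have hbd : b * d = 4 := by linarith
        have hb : b.natAbs ∣ 4 := by
          have := Int.natAbs_dvd_natAbs.2 (Dvd.intro _ hbd)
          simpa using this
        have hd : d.natAbs ∣ 4 := by
          have := Int.natAbs_dvd_natAbs.2 (Dvd.intro_left _ hbd)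
          simpa using this
        have := Nat.le_of_dvd (by norm_num) hb
        have := Nat.le_of_dvd (by norm_num) hd
        omega

theorem FQ_irreducible (m : ℤ) (hm : 12 ≤ m) : Irreducible (FQ m) := by
  rw [← FZ_map, ← (FZ_monic m).irreducible_iff_irreducible_map_fraction_map]
  exact FZ_irreducible m hm

theorem FQ_aeval {K : Type*} [Field K] [CharZero K] (m : ℤ) (x : K) : aeval x (FQ m) =
    x ^ 4 + 2 * m * x ^ 3 + 2 * x ^ 2 - 2 * m * x + 1 := by
  simp [FQ]

theorem FZ_aeval {K : Type*} [CommRing K] (m : ℤ) (x : K) : aeval x (FZ m) =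
    x ^ 4 + 2 * m * x ^ 3 + 2 * x ^ 2 - 2 * m * x + 1 := by
  simp only [FZ, map_add, map_sub, map_mul, map_pow, aeval_X, map_one, eq_intCast]
  have h2 : (aeval x) (2 : ℤ[X]) = 2 := map_ofNat _ 2
  push_cast
  rw [h2, map_intCast]
end polys

theorem sq_real_im {z : ℂ} {r : ℝ} (hr : 0 ≤ r) (h : z ^ 2 = r) : z.im = 0 := by
  have h1 := congrArg Complex.re h
  have h2 := congrArg Complex.im h
  simp [pow_two] at h1 h2
  have h3 : z.re * z.im = 0 := by linarith
  rcases mul_eq_zero.1 h3 with h | h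
  · rw [h] at h1; nlinarith [mul_self_nonneg z.im, mul_self_eq_zero.1 (by nlinarith [mul_self_nonneg z.im] : z.im * z.im = 0)]
  · exact h

theorem root_real (m : ℤ) (hm : 12 ≤ m) (x : ℂ)
    (hx : x ^ 4 + 2 * m * x ^ 3 + 2 * x ^ 2 - 2 * m * x + 1 = 0) : x.im = 0 := by
  have hx0 : x ≠ 0 := by rintro rfl; simp at hx
  obtain ⟨t, ht⟩ : ∃ t : ℂ, t * x = x ^ 2 - 1 := ⟨(x ^ 2 - 1) / x, by field_simp⟩
  have h1 : t ^ 2 + 2 * m * t + 4 = 0 := by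
    have : x ^ 2 * (t ^ 2 + 2 * m * t + 4) = 0 := by
      linear_combination hx + (t * x + (x ^ 2 - 1) + 2 * m * x) * ht
    exact (mul_eq_zero.1 this).resolve_left (pow_ne_zero _ hx0)
  have hm' : (12 : ℝ) ≤ m := by exact_mod_cast hm
  have h2 : (t + m).im = 0 := by
    apply sq_real_im (r := (m:ℝ)^2 - 4) (by nlinarith)
    push_cast
    linear_combination h1
  have h3 : t.im = 0 := by simpa using h2
  have h4 : ((t.re : ℝ) : ℂ) = t := by apply Complex.ext <;> simp [h3]
  have h5 : (2 * x - t).im = 0 := by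
    apply sq_real_im (r := t.re ^ 2 + 4) (by positivity)
    push_cast
    rw [h4]
    linear_combination -4 * ht
  simpa [h3] using h5
section fields
open Polynomial NumberField

/-- The quartic equation. -/
def IsRt {K : Type*} [Field K] (m : ℤ) (x : K) : Prop :=
  x ^ 4 + 2 * m * x ^ 3 + 2 * x ^ 2 - 2 * m * x + 1 = 0

theorem IsRt.ne {K : Type*} [Field K] [CharZero K] {m : ℤ} {x : K} (h : IsRt m x) :
    x ≠ 0 ∧ 1 + x ≠ 0 ∧ x - 1 ≠ 0 := by
  unfold IsRt at h
  have h4 : (4 : K) ≠ 0 := by norm_num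
  refine ⟨?_, ?_, ?_⟩
  · rintro rfl; simp at h
  · intro h0
    apply h4
    have : x = -1 := by linear_combination h0
    rw [this] at h; linear_combination h
  · intro h0
    apply h4
    have : x = 1 := by linear_combination h0
    rw [this] at h; linear_combination h

theorem IsRt.two {K : Type*} [Field K] [CharZero K] {m : ℤ} {x : K} (h : IsRt m x) :
    IsRt m (-1 / x) := by
  obtain ⟨h0, h1, h2⟩ := h.ne
  unfold IsRt at *
  field_simp
  linear_combination h

theorem IsRt.three {K : Type*} [Field K] [CharZero K] {m : ℤ} {x : K} (h : IsRt m x) :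
    IsRt m ((1 - x) / (1 + x)) := by
  obtain ⟨h0, h1, h2⟩ := h.ne
  unfold IsRt at *
  field_simp
  linear_combination 4 * h

theorem IsRt.four {K : Type*} [Field K] [CharZero K] {m : ℤ} {x : K} (h : IsRt m x) :
    IsRt m ((1 + x) / (x - 1)) := by
  obtain ⟨h0, h1, h2⟩ := h.ne
  unfold IsRt at *
  field_simp
  linear_combination 4 * h

theorem IsRt.integral {K : Type*} [Field K] {m : ℤ} {x : K} (h : IsRt m x) :
    IsIntegral ℤ x := ⟨FZ m, FZ_monic m, by
      have := FZ_aeval m x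
      unfold IsRt at h
      rw [h] at this; exact this⟩

variable {K : Type*} [Field K] [NumberField K] {m : ℤ} {x : K}

theorem IsRt.minpoly (h : IsRt m x) (hm : 12 ≤ m) : minpoly ℚ x = FQ m :=
  (minpoly.eq_of_irreducible_of_monic (FQ_irreducible m hm) (by rw [FQ_aeval]; exact h)
    (FQ_monic m)).symm

theorem IsRt.finrank (h : IsRt m x) (hm : 12 ≤ m) (hgen : Algebra.adjoin ℚ {x} = ⊤) :
    Module.finrank ℚ K = 4 := by
  have hi : IsIntegral ℚ x := h.integral.tower_top
  have := (PowerBasis.ofAdjoinEqTop hi hgen).finrank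
  rw [this, ← PowerBasis.natDegree_minpoly, PowerBasis.ofAdjoinEqTop_gen, h.minpoly hm, FQ_natDegree]

theorem IsRt.factor (h : IsRt m x) : (FQ m).map (algebraMap ℚ K) =
    (X - C x) * (X - C (-1 / x)) * (X - C ((1 - x) / (1 + x))) * (X - C ((1 + x) / (x - 1))) := by
  obtain ⟨h0, h1, h2⟩ := h.ne
  have e1 : x * (-1 / x) = -1 := by field_simp
  have e2 : ((1 - x) / (1 + x)) * ((1 + x) / (x - 1)) = -1 := by field_simp; ring
  have e3 : x + (-1 / x) + ((1 - x) / (1 + x)) + ((1 + x) / (x - 1)) = - (2 * m) := by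
    unfold IsRt at h
    field_simp
    linear_combination h
  have e4 : (x + (-1 / x)) * (((1 - x) / (1 + x)) + ((1 + x) / (x - 1))) = 4 := by
    field_simp
    ring
  set a := x
  set b := -1 / x
  set c := (1 - x) / (1 + x)
  set d := (1 + x) / (x - 1)
  have E1 : (C a * C b : K[X]) = -1 := by rw [← C_mul, e1]; simp
  have E2 : (C c * C d : K[X]) = -1 := by rw [← C_mul, e2]; simp
  have E3 : (C a + C b + C c + C d : K[X]) = - C (2 * (m : K)) := by
    rw [← C_add, ← C_add, ← C_add, e3, C_neg]
  have E4 : ((C a + C b) * (C c + C d) : K[X]) = 4 := by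
    rw [← C_add, ← C_add, ← C_mul, e4]; rfl
  have E5 : (FQ m).map (algebraMap ℚ K) =
      X ^ 4 + C (2 * (m : K)) * X ^ 3 + 2 * X ^ 2 - C (2 * (m : K)) * X + 1 := by
    simp only [FQ, Polynomial.map_add, Polynomial.map_sub, Polynomial.map_mul, Polynomial.map_pow,
      Polynomial.map_X, Polynomial.map_C, Polynomial.map_one]
    have e2 : algebraMap ℚ K 2 = 2 := map_ofNat _ 2
    rw [map_mul, map_intCast, e2]; rfl
  rw [E5]
  linear_combination (-(X ^ 2 - (C c + C d) * X + C c * C d)) * E1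
    + (-(X ^ 2 - (C a + C b) * X - 1)) * E2 + (X ^ 3 - X) * E3 - X ^ 2 * E4

theorem IsRt.splitting (h : IsRt m x) (hgen : Algebra.adjoin ℚ {x} = ⊤) :
    (FQ m).IsSplittingField ℚ K := by
  constructor
  · rw [h.factor]
    exact ((((Splits.X_sub_C _).mul (Splits.X_sub_C _)).mul (Splits.X_sub_C _)).mul (Splits.X_sub_C _))
  · rw [eq_top_iff, ← hgen]
    apply Algebra.adjoin_mono
    rw [Set.singleton_subset_iff, mem_rootSet]
    exact ⟨(FQ_monic m).ne_zero, by rw [FQ_aeval]; exact h⟩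

theorem IsRt.galois (h : IsRt m x) (hm : 12 ≤ m) (hgen : Algebra.adjoin ℚ {x} = ⊤) :
    IsGalois ℚ K := by
  have := h.splitting hgen
  exact IsGalois.of_separable_splitting_field (FQ_irreducible m hm).separable

theorem IsRt.cases (h : IsRt m x) (z : K) (hz : IsRt m z) :
    z = x ∨ z = -1 / x ∨ z = (1 - x) / (1 + x) ∨ z = (1 + x) / (x - 1) := by
  have h1 := congrArg (eval z) h.factor
  rw [eval_map_algebraMap, FQ_aeval] at h1
  unfold IsRt at hz
  rw [hz] at h1
  simp only [eval_mul, eval_sub, eval_X, eval_C] at h1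
  rw [eq_comm, mul_eq_zero, mul_eq_zero, mul_eq_zero] at h1
  simp only [sub_eq_zero] at h1
  tauto

theorem IsRt.map {L : Type*} [Field L] (h : IsRt m x) (f : K →+* L) : IsRt m (f x) := by
  unfold IsRt at *
  have := congrArg f h
  have h2 : f 2 = 2 := map_ofNat f 2
  simpa [h2] using this

theorem IsRt.klein (h : IsRt m x) (hm : 12 ≤ m) (hgen : Algebra.adjoin ℚ {x} = ⊤) :
    Nonempty ((K ≃ₐ[ℚ] K) ≃* Multiplicative (ZMod 2 × ZMod 2)) := by
  have := h.galois hm hgen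
  obtain ⟨h0, h1, h2⟩ := h.ne
  have hcard : Nat.card (K ≃ₐ[ℚ] K) = 4 := by
    rw [IsGalois.card_aut_eq_finrank, h.finrank hm hgen]
  have hext : ∀ σ τ : K ≃ₐ[ℚ] K, σ x = τ x → σ = τ := by
    intro σ τ hst
    have : (σ : K →ₐ[ℚ] K) = τ := by
      apply AlgHom.ext_of_adjoin_eq_top hgen
      intro y hy
      rw [Set.mem_singleton_iff] at hy
      rw [hy]; exact hst
    ext y
    exact DFunLike.congr_fun this y
  have hsq : ∀ σ : K ≃ₐ[ℚ] K, σ ^ 2 = 1 := by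
    intro σ
    apply hext
    rw [pow_two, AlgEquiv.mul_apply, AlgEquiv.one_apply]
    have h2' : (2 : K) ≠ 0 := two_ne_zero
    rcases h.cases (σ x) (h.map (σ : K →+* K)) with h' | h' | h' | h'
    · rw [h', h']
    · rw [h', map_div₀, h', map_neg, map_one]; field_simp
    · have h5 : 1 + (1 - x) / (1 + x) ≠ 0 := by
        have : 1 + (1 - x) / (1 + x) = 2 / (1 + x) := by field_simp; ring
        rw [this]; exact div_ne_zero h2' h1
      rw [h', map_div₀, map_add, map_sub, map_one, h', div_eq_iff h5]; field_simp; ring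
    · have h5 : (1 + x) / (x - 1) - 1 ≠ 0 := by
        have : (1 + x) / (x - 1) - 1 = 2 / (x - 1) := by field_simp; ring
        rw [this]; exact div_ne_zero h2' h2
      rw [h', map_div₀, map_add, map_sub, map_one, h', div_eq_iff h5]; field_simp; ring
  have : IsKleinFour (K ≃ₐ[ℚ] K) := by
    refine ⟨hcard, ?_⟩
    have hd : Monoid.exponent (K ≃ₐ[ℚ] K) ∣ 2 := Monoid.exponent_dvd_of_forall_pow_eq_one hsq
    rcases (Nat.dvd_prime Nat.prime_two).1 hd with h' | h'
    · exfalso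
      rw [Monoid.exp_eq_one_iff] at h'
      rw [Nat.card_unique] at hcard
      omega
    · exact h'
  exact IsKleinFour.nonempty_mulEquiv

theorem IsRt.totallyReal (h : IsRt m x) (hm : 12 ≤ m) (hgen : Algebra.adjoin ℚ {x} = ⊤)
    (φ : K →+* ℂ) (z : K) : (φ z).im = 0 := by
  have hz : z ∈ Algebra.adjoin ℚ {x} := by rw [hgen]; trivial
  induction hz using Algebra.adjoin_induction with
  | mem y hy =>
    rw [Set.mem_singleton_iff] at hy
    rw [hy]
    exact root_real m hm _ (h.map φ)
  | algebraMap r => simp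
  | add a b _ _ ha hb => simp [ha, hb]
  | mul a b _ _ ha hb => simp [ha, hb]

end fields
section homs
open Polynomial NumberField

theorem exists_padic_root (m : ℤ) (q : ℕ) [Fact q.Prime] (c : ℤ)
    (hF : (q:ℤ) ∣ c^4 + 2*m*c^3 + 2*c^2 - 2*m*c + 1)
    (hF' : ¬ (q:ℤ) ∣ 4*c^3 + 6*m*c^2 + 4*c - 2*m) :
    ∃ z : ℤ_[q], aeval z (FZ m) = 0 ∧ PadicInt.toZMod z = (c : ZMod q) := by
  have hev : aeval (c : ℤ_[q]) (FZ m) =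
      ((c^4 + 2*m*c^3 + 2*c^2 - 2*m*c + 1 : ℤ) : ℤ_[q]) := by
    rw [FZ_aeval]; push_cast; ring
  have hdev : aeval (c : ℤ_[q]) (derivative (FZ m)) =
      ((4*c^3 + 6*m*c^2 + 4*c - 2*m : ℤ) : ℤ_[q]) := by
    have hd : derivative (FZ m) = C 4 * X ^ 3 + C (6 * m) * X ^ 2 + C 4 * X - C (2 * m) := by
      simp only [FZ, derivative_add, derivative_sub, derivative_C_mul, derivative_X_pow,
        derivative_X, derivative_one]
      simp only [eq_intCast]
      push_cast
      ring
    rw [hd]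
    simp only [map_add, map_sub, map_mul, map_pow, aeval_X,
      eq_intCast]
    have h2 : (aeval (c : ℤ_[q])) (4 : ℤ[X]) = 4 := map_ofNat _ 4
    have h2 : (aeval (c : ℤ_[q])) (6 : ℤ[X]) = 6 := map_ofNat _ 6
    have h2 : (aeval (c : ℤ_[q])) (2 : ℤ[X]) = 2 := map_ofNat _ 2
    simp only [map_intCast]
    push_cast
    ring
  have hn1 : ‖aeval (c : ℤ_[q]) (FZ m)‖ < 1 := by
    rw [hev]; exact (PadicInt.norm_int_lt_one_iff_dvd _).2 hF
  have hn2 : ‖aeval (c : ℤ_[q]) (derivative (FZ m))‖ = 1 := by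
    rw [hdev]
    refine le_antisymm (PadicInt.norm_le_one _) ?_
    by_contra hlt
    push Not at hlt
    exact hF' ((PadicInt.norm_int_lt_one_iff_dvd _).1 hlt)
  obtain ⟨z, hz, hza, -⟩ := hensels_lemma (F := FZ m) (a := (c : ℤ_[q])) (by rw [hn2]; simpa using hn1)
  refine ⟨z, hz, ?_⟩
  rw [hn2] at hza
  have : z - c ∈ RingHom.ker (PadicInt.toZMod (p := q)) := by
    rw [PadicInt.ker_toZMod, IsLocalRing.mem_maximalIdeal, PadicInt.mem_nonunits]
    exact hza
  rw [RingHom.mem_ker, map_sub, map_intCast, sub_eq_zero] at this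
  exact this

theorem exists_hom {K : Type*} [Field K] [NumberField K] {m : ℤ} {x : K} (h : IsRt m x)
    (hm : 12 ≤ m) (hgen : Algebra.adjoin ℚ {x} = ⊤) (q : ℕ) [Fact q.Prime] (c : ℤ)
    (hF : (q:ℤ) ∣ c^4 + 2*m*c^3 + 2*c^2 - 2*m*c + 1)
    (hF' : ¬ (q:ℤ) ∣ 4*c^3 + 6*m*c^2 + 4*c - 2*m) :
    ∃ ψ : 𝓞 K →+* ZMod q, ∀ X : 𝓞 K, (X : K) = x → ψ X = (c : ZMod q) := by
  obtain ⟨z, hz, hzc⟩ := exists_padic_root m q c hF hF'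
  have hi : IsIntegral ℚ x := h.integral.tower_top
  let pb := PowerBasis.ofAdjoinEqTop hi hgen
  have hgenpb : pb.gen = x := PowerBasis.ofAdjoinEqTop_gen hi hgen
  obtain ⟨g, hgx⟩ : ∃ g : K →ₐ[ℚ] ℚ_[q], g pb.gen = z := ⟨pb.lift (z : ℚ_[q]) (by
    rw [hgenpb, h.minpoly hm, FQ_aeval]
    rw [FZ_aeval] at hz
    have := congrArg (fun w : ℤ_[q] => (w : ℚ_[q])) hz
    push_cast at this
    exact this), pb.lift_gen _ _⟩
  rw [hgenpb] at hgx
  have hIntegral : ∀ w : 𝓞 K, ‖g w‖ ≤ 1 := by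
    intro w
    have h1 : IsIntegral ℤ (g w) := by
      have := w.isIntegral_coe
      exact this.map (g.restrictScalars ℤ)
    have h2 : IsIntegral ℤ_[q] (g w) := h1.tower_top
    obtain ⟨v, hv⟩ := IsIntegrallyClosed.isIntegral_iff.1 h2
    rw [← hv]
    exact v.2
  let G : 𝓞 K →+* ℤ_[q] :=
    { toFun := fun w => ⟨g w, hIntegral w⟩
      map_one' := by apply Subtype.ext; simp
      map_zero' := by apply Subtype.ext; simp
      map_mul' := fun a b => by apply Subtype.ext; simp; rfl
      map_add' := fun a b => by apply Subtype.ext; simp; rfl }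
  refine ⟨PadicInt.toZMod.comp G, ?_⟩
  intro X hX
  rw [← hzc]
  have : G X = z := by
    apply Subtype.ext
    change g X = z
    rw [hX, hgx]
  rw [RingHom.comp_apply, this]
end homs
section places
open Polynomial NumberField

theorem small_ne_zero (q : ℕ) (hq : q.Prime) (hq7 : 7 < q) :
    (2 : ZMod q) ≠ 0 ∧ (3 : ZMod q) ≠ 0 ∧ (5 : ZMod q) ≠ 0 ∧ (7 : ZMod q) ≠ 0 := by
  have hne : ∀ r : ℕ, 0 < r → r ≤ 7 → (r : ZMod q) ≠ 0 := by
    intro r hr0 hr h0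
    rw [ZMod.natCast_eq_zero_iff] at h0
    have := Nat.le_of_dvd hr0 h0
    omega
  have h2 := hne 2 (by norm_num) (by norm_num)
  have h3 := hne 3 (by norm_num) (by norm_num)
  have h5 := hne 5 (by norm_num) (by norm_num)
  have h7 := hne 7 (by norm_num) (by norm_num)
  push_cast at h2 h3 h5 h7
  exact ⟨h2, h3, h5, h7⟩

theorem exists_hom' {K : Type*} [Field K] [NumberField K] {m : ℤ} {x : K} (h : IsRt m x)
    (hm : 12 ≤ m) (hgen : Algebra.adjoin ℚ {x} = ⊤) (q : ℕ) (hq : q.Prime) (hq7 : 7 < q)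
    (hqm : (12 * m + 25 : ZMod q) = 0) (c : ℤ)
    (hc : (c : ZMod q) = 2 ∨ (c : ZMod q) = 3 ∨ (2 * c + 1 : ZMod q) = 0) :
    ∃ ψ : 𝓞 K →+* ZMod q, ∀ X : 𝓞 K, (X : K) = x → ψ X = (c : ZMod q) := by
  have := Fact.mk hq
  obtain ⟨h2, h3, h5, h7⟩ := small_ne_zero q hq hq7
  have h35 : (35 : ZMod q) ≠ 0 := by
    have : (35 : ZMod q) = 5 * 7 := by norm_num
    rw [this]; exact mul_ne_zero h5 h7
  have hF : ((c^4 + 2*m*c^3 + 2*c^2 - 2*m*c + 1 : ℤ) : ZMod q) = 0 := by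
    push_cast
    rcases hc with hc | hc | hc
    · rw [hc]; linear_combination hqm
    · rw [hc]; linear_combination 4 * hqm
    · have : (2 : ZMod q) ^ 4 * (c^4 + 2*m*c^3 + 2*c^2 - 2*m*c + 1) = 0 := by
        linear_combination hqm + (((2 * c) ^ 3 - (2 * c) ^ 2 + 2 * c - 1)
          + 4 * m * ((2 * c) ^ 2 - 2 * c + 1) + 8 * (2 * c - 1) - 16 * m) * hc
      exact (mul_eq_zero.1 this).resolve_left (pow_ne_zero _ h2)
  have hF' : ((4*c^3 + 6*m*c^2 + 4*c - 2*m : ℤ) : ZMod q) ≠ 0 := by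
    push_cast
    intro h0
    apply h35
    rcases hc with hc | hc | hc
    · rw [hc] at h0; linear_combination 11 * hqm - 6 * h0
    · rw [hc] at h0; linear_combination 3 * h0 - 13 * hqm
    · linear_combination -24 * h0 - hqm + (12 * ((2 * c) ^ 2 - 2 * c + 1)
        + 36 * m * (2 * c - 1) + 48) * hc
  refine exists_hom h hm hgen q c ?_ ?_
  · exact (ZMod.intCast_zmod_eq_zero_iff_dvd _ _).1 hF
  · intro h0; exact hF' ((ZMod.intCast_zmod_eq_zero_iff_dvd _ _).2 h0)

theorem clear_den {R : Type*} [CommRing R] (P e : ℕ) (v r s : R) (h : r * v = s) :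
    v ^ e * (r ^ e) ^ (P + 1) = s ^ e * r ^ (P * e) := by
  rw [← h]; ring

theorem lemE {R : Type*} [CommRing R] (p : ℕ) (hp : p.Prime) (Q0 : Finset ℕ)
    (hQ0 : ∀ q ∈ Q0, q.Prime ∧ 7 < q)
    (hF : ∀ s a b c d : ℕ,
      (∀ q ∈ Q0, ∃ z : ZMod q, z ^ p = (-1) ^ s * 2 ^ a * 3 ^ b * 5 ^ c * 7 ^ d) →
      p ∣ a ∧ p ∣ b ∧ p ∣ c ∧ p ∣ d)
    (x1 x2 x3 u : R) (h12 : x1 * x2 = -1) (h13 : (1 + x1) * x3 = 1 - x1) (hu : 2 * u = x1 + x2)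
    (hψ : ∀ q ∈ Q0, ∀ c : ℤ, ((c : ZMod q) = 2 ∨ (c : ZMod q) = 3 ∨ (2 * c + 1 : ZMod q) = 0) →
      ∃ ψ : R →+* ZMod q, ψ x1 = (c : ZMod q))
    (e0 e1 e2 e3 f1 f2 f3 : ℕ) (he1 : e1 < p) (he2 : e2 < p) (he3 : e3 < p)
    (hf1 : f1 < p) (hf2 : f2 < p) (hf3 : f3 < p) (γ : R)
    (heq : (-1) ^ e0 * x1 ^ e1 * x3 ^ e2 * u ^ e3 * (x1 - 2) ^ f1 * (x2 - 2) ^ f2 * (x3 - 2) ^ f3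
      = γ ^ p) : e1 = 0 ∧ e2 = 0 ∧ e3 = 0 ∧ f1 = 0 ∧ f2 = 0 ∧ f3 = 0 := by
  obtain ⟨P, rfl⟩ : ∃ P, p = P + 1 := ⟨p - 1, by have := hp.pos; omega⟩
  have zero_of : ∀ a : ℕ, a < P + 1 → P + 1 ∣ a → a = 0 := fun a h1 h2 =>
    Nat.eq_zero_of_dvd_of_lt h2 h1
  have hmap : ∀ q (ψ : R →+* ZMod q), (ψ x1 * ψ x2 = -1) ∧ ((1 + ψ x1) * ψ x3 = 1 - ψ x1) ∧
      (2 * ψ u = ψ x1 + ψ x2) ∧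
      ((-1) ^ e0 * ψ x1 ^ e1 * ψ x3 ^ e2 * ψ u ^ e3 * (ψ x1 - 2) ^ f1 * (ψ x2 - 2) ^ f2 *
        (ψ x3 - 2) ^ f3 = ψ γ ^ (P + 1)) := by
    intro q ψ
    have h2 : ψ 2 = 2 := map_ofNat ψ 2
    refine ⟨?_, ?_, ?_, ?_⟩
    · rw [← map_mul, h12]; simp
    · have := congrArg ψ h13; simpa using this
    · have := congrArg ψ hu; simpa [h2] using this
    · have := congrArg ψ heq; simpa [h2] using this
  -- place x1 = 3
  have p3 := hF (e0 + e2 + f2 + f3) (P * e2 + 2 * e3 + P * f3) (e1 + P * e3 + P * f2) f3 f2 (by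
    intro q hq
    have := Fact.mk (hQ0 q hq).1
    obtain ⟨g2, g3, g5, g7⟩ := small_ne_zero q (hQ0 q hq).1 (hQ0 q hq).2
    obtain ⟨ψ, hψ1⟩ := hψ q hq 3 (by right; left; norm_num)
    obtain ⟨k1, k2, k3, k4⟩ := hmap q ψ
    push_cast at hψ1
    rw [hψ1] at k1 k2 k3 k4
    have v3 : 2 * ψ x3 = -1 := by
      apply mul_left_cancel₀ g2; linear_combination k2
    have vu : 3 * ψ u = 2 ^ 2 := by
      apply mul_left_cancel₀ g2; linear_combination 3 * k3 + k1
    have va2 : 3 * (ψ x2 - 2) = (-1) * 7 := by linear_combination k1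
    have va3 : 2 * (ψ x3 - 2) = (-1) * 5 := by linear_combination v3
    have w1 := clear_den P e2 _ _ _ v3
    have w2 := clear_den P e3 _ _ _ vu
    have w3 := clear_den P f2 _ _ _ va2
    have w4 := clear_den P f3 _ _ _ va3
    refine ⟨ψ γ * 2 ^ e2 * 3 ^ e3 * 3 ^ f2 * 2 ^ f3, ?_⟩
    calc _ = ψ γ ^ (P + 1) * (2 ^ e2) ^ (P + 1) * (3 ^ e3) ^ (P + 1) * (3 ^ f2) ^ (P + 1) *
          (2 ^ f3) ^ (P + 1) := by simp only [mul_pow]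
      _ = (-1) ^ e0 * 3 ^ e1 * (3 - 2) ^ f1 * (ψ x3 ^ e2 * (2 ^ e2) ^ (P + 1)) *
          (ψ u ^ e3 * (3 ^ e3) ^ (P + 1)) * ((ψ x2 - 2) ^ f2 * (3 ^ f2) ^ (P + 1)) *
          ((ψ x3 - 2) ^ f3 * (2 ^ f3) ^ (P + 1)) := by rw [← k4]; ring
      _ = _ := by
        rw [w1, w2, w3, w4]
        have : (3 - 2 : ZMod q) = 1 := by norm_num
        rw [this, one_pow, mul_pow, mul_pow, ← pow_mul]
        simp only [pow_add]
        ring)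
  obtain ⟨d1, d2, d3, d4⟩ := p3
  have z3 := zero_of _ hf3 d3
  have z2 := zero_of _ hf2 d4
  subst z3 z2
  -- place x1 = -1/2
  have pm := hF (e0 + e1 + f1) (P * e1 + 2 * (P * e3) + P * f1) (e2 + e3) f1 0 (by
    intro q hq
    have := Fact.mk (hQ0 q hq).1
    obtain ⟨g2, g3, g5, g7⟩ := small_ne_zero q (hQ0 q hq).1 (hQ0 q hq).2
    have hodd : ∃ c : ℕ, 2 * c + 1 = q := by
      rcases (hQ0 q hq).1.eq_two_or_odd' with h | h
      · have := (hQ0 q hq).2; omega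
      · obtain ⟨c, hc⟩ := h; exact ⟨c, hc.symm⟩
    obtain ⟨c, hc⟩ := hodd
    have hc' : (2 * c + 1 : ZMod q) = 0 := by
      have : ((2 * c + 1 : ℕ) : ZMod q) = 0 := by rw [hc]; simp
      push_cast at this; exact this
    obtain ⟨ψ, hψ1⟩ := hψ q hq c (by right; right; push_cast; exact hc')
    obtain ⟨k1, k2, k3, k4⟩ := hmap q ψ
    push_cast at hψ1
    have v1 : 2 * ψ x1 = -1 := by rw [hψ1]; linear_combination hc'
    have v2 : ψ x2 = 2 := by linear_combination -2 * k1 + ψ x2 * v1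
    have v3 : ψ x3 = 3 := by linear_combination 2 * k2 - (ψ x3 + 1) * v1
    have vu : 2 ^ 2 * ψ u = 3 := by linear_combination 2 * k3 + v1 + 2 * v2
    have va1 : 2 * (ψ x1 - 2) = (-1) * 5 := by linear_combination v1
    have w1 := clear_den P e1 _ _ _ v1
    have w2 := clear_den P e3 _ _ _ vu
    have w3 := clear_den P f1 _ _ _ va1
    refine ⟨ψ γ * 2 ^ e1 * (2 ^ 2) ^ e3 * 2 ^ f1, ?_⟩
    calc _ = ψ γ ^ (P + 1) * (2 ^ e1) ^ (P + 1) * ((2 ^ 2) ^ e3) ^ (P + 1) *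
          (2 ^ f1) ^ (P + 1) := by simp only [mul_pow]
      _ = (-1) ^ e0 * ψ x3 ^ e2 * (ψ x1 ^ e1 * (2 ^ e1) ^ (P + 1)) *
          (ψ u ^ e3 * ((2 ^ 2) ^ e3) ^ (P + 1)) * ((ψ x1 - 2) ^ f1 * (2 ^ f1) ^ (P + 1)) := by
            rw [← k4]; ring
      _ = _ := by
        rw [w1, w2, w3, v3, mul_pow, ← pow_mul 2 2]
        simp only [pow_add]
        ring)
  have z1 := zero_of _ hf1 pm.2.2.1
  subst z1
  -- place x1 = 2
  have p2 := hF (e0 + e2) (e1 + 2 * (P * e3)) (P * e2 + e3) 0 0 (by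
    intro q hq
    have := Fact.mk (hQ0 q hq).1
    obtain ⟨g2, g3, g5, g7⟩ := small_ne_zero q (hQ0 q hq).1 (hQ0 q hq).2
    obtain ⟨ψ, hψ1⟩ := hψ q hq 2 (by left; norm_num)
    obtain ⟨k1, k2, k3, k4⟩ := hmap q ψ
    push_cast at hψ1
    rw [hψ1] at k1 k2 k3 k4
    have v3 : 3 * ψ x3 = -1 := by linear_combination k2
    have vu : 2 ^ 2 * ψ u = 3 := by linear_combination 2 * k3 + k1
    have w1 := clear_den P e2 _ _ _ v3
    have w2 := clear_den P e3 _ _ _ vu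
    refine ⟨ψ γ * 3 ^ e2 * (2 ^ 2) ^ e3, ?_⟩
    calc _ = ψ γ ^ (P + 1) * (3 ^ e2) ^ (P + 1) * ((2 ^ 2) ^ e3) ^ (P + 1) := by
            simp only [mul_pow]
      _ = (-1) ^ e0 * 2 ^ e1 * (ψ x3 ^ e2 * (3 ^ e2) ^ (P + 1)) *
          (ψ u ^ e3 * ((2 ^ 2) ^ e3) ^ (P + 1)) := by
            rw [← k4]; ring
      _ = _ := by
        rw [w1, w2, ← pow_mul 2 2]
        simp only [pow_add]
        ring)
  obtain ⟨b1, b2, -, -⟩ := p2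
  simp only [mul_zero, add_zero] at d1 d2
  have q3 : P + 1 ∣ e3 := by
    have := (Nat.dvd_sub d1 b2)
    have e : P * e2 + 2 * e3 - (P * e2 + e3) = e3 := by omega
    rwa [e] at this
  have z3 := zero_of _ he3 q3
  subst z3
  simp only [mul_zero, add_zero] at d1 d2
  have z1 := zero_of _ he1 d2
  have z2 : e2 = 0 := by
    apply zero_of _ he2
    have : Nat.Coprime (P + 1) P := by simp
    exact this.dvd_of_dvd_mul_left d1
  exact ⟨z1, z2, rfl, rfl, rfl, rfl⟩
end places
section unitsec
open Polynomial NumberField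

set_option maxSynthPendingDepth 3 in
theorem units_lemma {K : Type*} [Field K] [NumberField K] (hrank : Units.rank K = 3)
    (htors : ∀ ζ : (𝓞 K)ˣ, ζ ∈ Units.torsion K → ∃ s : ℕ, ζ = (-1) ^ s) (p : ℕ) (hp : p.Prime)
    (w : Fin 3 → (𝓞 K)ˣ)
    (hind : ∀ e : Fin 3 → ℕ, (∀ i, e i < p) → ∀ (s : ℕ) (v : (𝓞 K)ˣ),
      (-1) ^ s * ∏ i, w i ^ e i = v ^ p → ∀ i, e i = 0) (z : (𝓞 K)ˣ) :
    ∃ (s : ℕ) (e : Fin 3 → ℕ) (v : (𝓞 K)ˣ), (∀ i, e i < p) ∧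
      z = (-1) ^ s * (∏ i, w i ^ e i) * v ^ p := by
  have := Fact.mk hp
  let b : Module.Basis (Fin 3) ℤ (Additive ((𝓞 K)ˣ ⧸ (Units.torsion K))) :=
    (Units.basisModTorsion K).reindex (finCongr hrank)
  let ρ : Additive ((𝓞 K)ˣ ⧸ (Units.torsion K)) →+ (Fin 3 → ZMod p) :=
    { toFun := fun g i => (b.repr g i : ZMod p)
      map_zero' := by funext i; simp
      map_add' := by intro g h; funext i; simp }
  have hρ : ∀ g, ρ g = 0 → ∃ h, g = p • h := by
    intro g hg
    have h1 : ∀ i, ∃ k : ℤ, b.repr g i = p * k := by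
      intro i
      have : (b.repr g i : ZMod p) = 0 := congrFun hg i
      exact (ZMod.intCast_zmod_eq_zero_iff_dvd _ _).1 this
    choose k hk using h1
    refine ⟨b.equivFun.symm k, ?_⟩
    apply b.equivFun.injective
    funext i
    rw [map_nsmul, LinearEquiv.apply_symm_apply]
    simp [hk]
  let π : Additive (𝓞 K)ˣ →+ Additive ((𝓞 K)ˣ ⧸ (Units.torsion K)) :=
    MonoidHom.toAdditive (QuotientGroup.mk' (Units.torsion K))
  have hπ : ∀ z : (𝓞 K)ˣ, ρ (π (Additive.ofMul z)) = 0 →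
      ∃ (s : ℕ) (v : (𝓞 K)ˣ), z = (-1) ^ s * v ^ p := by
    intro z hz
    obtain ⟨h, hh⟩ := hρ _ hz
    obtain ⟨v, hv⟩ := QuotientGroup.mk'_surjective (Units.torsion K) (Additive.toMul h)
    have h1 : (QuotientGroup.mk' (Units.torsion K)) z = (QuotientGroup.mk' (Units.torsion K)) (v ^ p) := by
      rw [map_pow, hv]
      exact congrArg Additive.toMul hh
    have h2 : (v ^ p)⁻¹ * z ∈ Units.torsion K := by
      rw [QuotientGroup.mk'_apply, QuotientGroup.mk'_apply] at h1
      exact QuotientGroup.eq.1 h1.symm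
    obtain ⟨s, hs⟩ := htors _ h2
    refine ⟨s, v, ?_⟩
    rw [← hs]; simp
  let vv : Fin 3 → (Fin 3 → ZMod p) := fun i => ρ (π (Additive.ofMul (w i)))
  have hprod : ∀ e : Fin 3 → ℕ, ρ (π (Additive.ofMul (∏ i, w i ^ e i))) = ∑ i, (e i : ZMod p) • vv i := by
    intro e
    rw [ofMul_prod, map_sum, map_sum]
    apply Finset.sum_congr rfl
    intro i _
    rw [ofMul_pow, map_nsmul, map_nsmul]
    simp only [vv]
    rw [Nat.cast_smul_eq_nsmul]
  have hli : LinearIndependent (ZMod p) vv := by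
    rw [Fintype.linearIndependent_iff]
    intro c hc i
    have h1 := hprod (fun i => (c i).val)
    simp only [ZMod.natCast_zmod_val] at h1
    rw [hc] at h1
    obtain ⟨s, v, hv⟩ := hπ _ h1
    have := hind (fun i => (c i).val) (fun i => ZMod.val_lt _) s v (by
      rw [hv, ← mul_assoc, ← mul_pow]; simp) i
    exact (ZMod.val_eq_zero _).1 this
  have hspan : Submodule.span (ZMod p) (Set.range vv) = ⊤ :=
    hli.span_eq_top_of_card_eq_finrank' (by simp)
  have hmem : ρ (π (Additive.ofMul z)) ∈ Submodule.span (ZMod p) (Set.range vv) := by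
    rw [hspan]; trivial
  rw [Submodule.mem_span_range_iff_exists_fun] at hmem
  obtain ⟨c, hc⟩ := hmem
  have h1 := hprod (fun i => (c i).val)
  simp only [ZMod.natCast_zmod_val] at h1
  rw [hc] at h1
  obtain ⟨s, v, hv⟩ := hπ (z * (∏ i, w i ^ (c i).val)⁻¹) (by
    rw [ofMul_mul, ofMul_inv, map_add, map_add, map_neg π, map_neg ρ, h1, add_neg_cancel])
  refine ⟨s, fun i => (c i).val, v, fun i => ZMod.val_lt _, ?_⟩
  rw [mul_inv_eq_iff_eq_mul] at hv
  rw [hv, mul_right_comm]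

theorem IsRt.rank {K : Type*} [Field K] [NumberField K] {m : ℤ} {x : K} (h : IsRt m x)
    (hm : 12 ≤ m) (hgen : Algebra.adjoin ℚ {x} = ⊤) : Units.rank K = 3 := by
  have htr : IsTotallyReal K := by
    constructor
    intro v
    rw [InfinitePlace.isReal_iff]
    rw [ComplexEmbedding.isReal_iff]
    ext z
    rw [ComplexEmbedding.conjugate_coe_eq]
    exact Complex.conj_eq_iff_im.2 (h.totallyReal hm hgen _ z)
  have h0 := InfinitePlace.card_add_two_mul_card_eq_rank K
  have h1 := InfinitePlace.card_eq_nrRealPlaces_add_nrComplexPlaces K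
  rw [nrComplexPlaces_eq_zero_iff.2 htr] at h0 h1
  rw [h.finrank hm hgen] at h0
  unfold Units.rank
  omega

theorem IsRt.tors {K : Type*} [Field K] [NumberField K] {m : ℤ} {x : K} (h : IsRt m x)
    (hm : 12 ≤ m) (hgen : Algebra.adjoin ℚ {x} = ⊤) (ζ : (𝓞 K)ˣ) (hζ : ζ ∈ Units.torsion K) :
    ∃ s : ℕ, ζ = (-1) ^ s := by
  obtain ⟨φ⟩ : Nonempty (K →+* ℂ) := inferInstance
  have him := h.totallyReal hm hgen φ (ζ : 𝓞 K)
  obtain ⟨k, hk0, hk⟩ := (isOfFinOrder_iff_pow_eq_one.1 ((CommGroup.mem_torsion _).1 hζ))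
  set r := (φ (ζ : 𝓞 K)).re
  have hr : ((r : ℝ) : ℂ) = φ (ζ : 𝓞 K) := by apply Complex.ext <;> simp [r, him]
  have hrk : r ^ k = 1 := by
    have : ((r : ℝ) : ℂ) ^ k = 1 := by
      rw [hr, ← map_pow]
      have := congrArg (fun u : (𝓞 K)ˣ => φ ((u : 𝓞 K) : K)) hk
      simpa using this
    exact_mod_cast this
  have habs : |r| = 1 := by
    have : |r| ^ k = 1 := by rw [← abs_pow, hrk, abs_one]
    exact (pow_eq_one_iff_of_nonneg (abs_nonneg r) hk0.ne').1 this
  have hinj : ∀ u : (𝓞 K)ˣ, φ ((ζ : 𝓞 K) : K) = φ ((u : 𝓞 K) : K) → ζ = u := by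
    intro u hu
    apply Units.ext
    exact RingOfIntegers.coe_injective (φ.injective hu)
  rcases (abs_eq zero_le_one).1 habs with h1 | h1
  · refine ⟨0, ?_⟩
    apply hinj
    rw [← hr, h1]; simp
  · refine ⟨1, ?_⟩
    apply hinj
    rw [← hr, h1]; simp

theorem exists_elts {K : Type*} [Field K] [NumberField K] {m : ℤ} {x : K} (h : IsRt m x) :
    ∃ X1 X2 X3 X4 U U' : 𝓞 K, (X1 : K) = x ∧ X1 * X2 = -1 ∧ X3 * X4 = -1 ∧
      (1 + X1) * X3 = 1 - X1 ∧ (X1 - 1) * X4 = 1 + X1 ∧ 2 * U = X1 + X2 ∧ U * U' = 1 ∧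
      (2 * U + m) ^ 2 = ((m ^ 2 - 4 : ℤ) : 𝓞 K) ∧
      (X1 - 2) * (X2 - 2) * (X3 - 2) * (X4 - 2) = 12 * m + 25 := by
  obtain ⟨h0, h1, h2⟩ := h.ne
  have h2' : (2 : K) ≠ 0 := two_ne_zero
  have hf := congrArg (eval 2) h.factor
  rw [eval_map_algebraMap, FQ_aeval] at hf
  simp only [eval_mul, eval_sub, eval_X, eval_C] at hf
  let u : K := (x + -1 / x) / 2
  let u' : K := ((1 - x) / (1 + x) + (1 + x) / (x - 1)) / 2
  have huu : u * u' = 1 := by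
    simp only [u, u']; field_simp; ring
  have huu2 : u + u' = -m := by
    have h' := h
    unfold IsRt at h'
    simp only [u, u']; field_simp; linear_combination h'
  have quad : u ^ 2 + m * u + 1 = 0 := by linear_combination -huu + u * huu2
  have quad' : u' ^ 2 + m * u' + 1 = 0 := by linear_combination -huu + u' * huu2
  have hIntegral : ∀ v : K, v ^ 2 + m * v + 1 = 0 → IsIntegral ℤ v := by
    intro v hv
    refine ⟨X ^ 2 + C m * X + 1, by monicity!, ?_⟩
    rw [eval₂_add, eval₂_add, eval₂_mul, eval₂_C, eval₂_pow, eval₂_X, eval₂_one]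
    simpa using hv
  have i2 : algebraMap (𝓞 K) K 2 = 2 := map_ofNat _ 2
  have i12 : algebraMap (𝓞 K) K 12 = 12 := map_ofNat _ 12
  have i25 : algebraMap (𝓞 K) K 25 = 25 := map_ofNat _ 25
  have i4 : algebraMap (𝓞 K) K 4 = 4 := map_ofNat _ 4
  obtain ⟨X1, hX1⟩ : ∃ X : 𝓞 K, algebraMap (𝓞 K) K X = x := ⟨⟨x, h.integral⟩, rfl⟩
  obtain ⟨X2, hX2⟩ : ∃ X : 𝓞 K, algebraMap (𝓞 K) K X = -1 / x := ⟨⟨_, h.two.integral⟩, rfl⟩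
  obtain ⟨X3, hX3⟩ : ∃ X : 𝓞 K, algebraMap (𝓞 K) K X = (1 - x) / (1 + x) :=
    ⟨⟨_, h.three.integral⟩, rfl⟩
  obtain ⟨X4, hX4⟩ : ∃ X : 𝓞 K, algebraMap (𝓞 K) K X = (1 + x) / (x - 1) :=
    ⟨⟨_, h.four.integral⟩, rfl⟩
  obtain ⟨U, hU⟩ : ∃ X : 𝓞 K, algebraMap (𝓞 K) K X = u := ⟨⟨u, hIntegral u quad⟩, rfl⟩
  obtain ⟨U', hU'⟩ : ∃ X : 𝓞 K, algebraMap (𝓞 K) K X = u' := ⟨⟨u', hIntegral u' quad'⟩, rfl⟩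
  have inj := FaithfulSMul.algebraMap_injective (𝓞 K) K
  refine ⟨X1, X2, X3, X4, U, U', hX1, ?_, ?_, ?_, ?_, ?_, ?_, ?_, ?_⟩ <;> apply inj
  · simp only [map_mul, map_neg, map_one, hX1, hX2]; field_simp
  · simp only [map_mul, map_neg, map_one, hX3, hX4]; field_simp; ring
  · simp only [map_mul, map_sub, map_add, map_one, hX1, hX3]; field_simp
  · simp only [map_mul, map_sub, map_add, map_one, hX1, hX4]; field_simp
  · simp only [map_mul, map_add, i2, hX1, hX2, hU, u]; field_simp
  · simp only [map_mul, map_one, hU, hU']; exact huu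
  · push_cast
    simp only [map_mul, map_sub, map_add, map_pow, map_intCast, i2, i4, hU]
    linear_combination 4 * quad
  · simp only [map_mul, map_sub, map_add, map_intCast, i2, i12, i25, hX1, hX2, hX3, hX4]
    linear_combination -hf
end unitsec
section clsec
open Polynomial NumberField
open scoped nonZeroDivisors

theorem class_abs {R : Type*} [CommRing R] [IsDomain R] [IsDedekindDomain R] (n : ℕ) (hn : 1 < n)
    (a : Fin 3 → R) (ha : ∀ i, a i ≠ 0) (hI : ∀ i, ∃ I : Ideal R, Ideal.span {a i} = I ^ n)
    (h : ∀ p : ℕ, p.Prime → p ∣ n → ∀ f : Fin 3 → ℕ, (∀ i, f i < p) →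
      ∀ (w : Rˣ) (γ : R), (w : R) * ∏ i, a i ^ f i = γ ^ p → ∀ i, f i = 0) :
    ∃ φ : Multiplicative (Fin 3 → ZMod n) →* ClassGroup R, Function.Injective φ := by
  choose I hI using hI
  have hI0 : ∀ i, I i ≠ 0 := by
    intro i hi
    have := hI i
    rw [hi, zero_pow (by omega)] at this
    exact ha i (Ideal.span_singleton_eq_bot.1 this)
  let J : Fin 3 → (Ideal R)⁰ := fun i => ⟨I i, mem_nonZeroDivisors_of_ne_zero (hI0 i)⟩
  apply group_rank _ n hn (fun i => ClassGroup.mk0 (J i))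
  · intro i
    rw [← map_pow]
    have h1 : J i ^ n = ⟨I i ^ n, pow_mem (J i).2 n⟩ := rfl
    rw [h1, ClassGroup.mk0_eq_one_iff, ← hI i]
    exact ⟨⟨a i, rfl⟩⟩
  · intro p hp hpn f hf hprod
    have h1 : ClassGroup.mk0 (∏ i, J i ^ ((n / p) * f i)) = 1 := by
      rw [map_prod, ← hprod]; simp only [map_pow]
    have h2 := (ClassGroup.mk0_eq_one_iff (∏ i, J i ^ ((n / p) * f i)).2).1 h1
    obtain ⟨⟨γ, hγ⟩⟩ := h2
    have h3 : ((∏ i, J i ^ ((n / p) * f i) : (Ideal R)⁰) : Ideal R) =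
        ∏ i, I i ^ ((n / p) * f i) := by
      simp [J]
    rw [h3] at hγ
    have h4 : Ideal.span {γ ^ p} = Ideal.span {∏ i, a i ^ f i} := by
      rw [← Ideal.span_singleton_pow, ← Ideal.prod_span_singleton]
      have : Ideal.span {γ} = ∏ i, I i ^ ((n / p) * f i) := hγ.symm
      rw [this, ← Finset.prod_pow]
      apply Finset.prod_congr rfl
      intro i _
      rw [← Ideal.span_singleton_pow, hI i, ← pow_mul, ← pow_mul]
      congr 1
      obtain ⟨k, rfl⟩ := hpn
      rw [Nat.mul_div_cancel_left _ hp.pos]; ring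
    rw [Ideal.span_singleton_eq_span_singleton] at h4
    obtain ⟨w, hw⟩ := h4.symm
    exact h p hp ⟨n / p, (Nat.mul_div_cancel' hpn).symm⟩ f hf w γ (by rw [← hw, mul_comm])

theorem cop_aux {R : Type*} [CommRing R] (a b u v : R) (d N : ℤ) (h : IsCoprime d N)
    (hd : u * a + v * b = d) (hN : a ∣ (N : R)) : IsCoprime a b := by
  obtain ⟨s, t, hst⟩ := h
  obtain ⟨c, hc⟩ := hN
  refine ⟨s * u + t * c, s * v, ?_⟩
  have : ((s * d + t * N : ℤ) : R) = 1 := by rw [hst]; simp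
  push_cast at this
  rw [hc, ← hd] at this
  linear_combination this

theorem span_pow_aux {R : Type*} [CommRing R] [IsDomain R] [IsDedekindDomain R] (a b y : R)
    (n : ℕ) (h : IsCoprime a b) (hab : a * b = y ^ n) : ∃ I : Ideal R, Ideal.span {a} = I ^ n := by
  apply exists_eq_pow_of_mul_eq_pow_of_coprime (b := Ideal.span {b}) (c := Ideal.span {y})
  · exact (Ideal.isCoprime_span_singleton_iff _ _).2 h
  · rw [Ideal.span_singleton_mul_span_singleton, hab, Ideal.span_singleton_pow]

theorem class_main {K : Type*} [Field K] [NumberField K] {m : ℤ} {x : K} (h : IsRt m x)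
    (hm : 12 ≤ m) (hgen : Algebra.adjoin ℚ {x} = ⊤) (n : ℕ) (hn : 1 < n) (y : ℕ)
    (hy : (12 * m + 25 : ℤ) = y ^ n) (h5 : ¬ 5 ∣ y) (h7 : ¬ 7 ∣ y) (Q0 : Finset ℕ)
    (hQ0 : ∀ q ∈ Q0, q.Prime ∧ 7 < q) (hQy : ∀ q ∈ Q0, q ∣ y)
    (hF : ∀ p, p.Prime → p ∣ n → ∀ s a b c d : ℕ, (∀ q ∈ Q0, ∃ z : ZMod q,
      z ^ p = (-1)^s*2^a*3^b*5^c*7^d) → p∣a ∧ p∣b ∧ p∣c ∧ p∣d) :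
    ∃ φ : Multiplicative (Fin 3 → ZMod n) →* ClassGroup (𝓞 K), Function.Injective φ := by
  obtain ⟨X1, X2, X3, X4, U, U', hX1, h12, h34, h13, h14, hU, hUU, -, hprod⟩ := exists_elts h
  have h24 : (1 + X2) * X4 = 1 - X2 := by linear_combination (X4 - 1) * h12 - X2 * h14
  have h23 : (X2 - 1) * X3 = 1 + X2 := by linear_combination X2 * h13 - (X3 + 1) * h12
  have hprod' : (X1 - 2) * (X2 - 2) * (X3 - 2) * (X4 - 2) = ((y ^ n : ℤ) : 𝓞 K) := by
    rw [hprod, ← hy]; push_cast; ring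
  have hN0 : ((y ^ n : ℤ) : 𝓞 K) ≠ 0 := by
    rw [Int.cast_ne_zero, ← hy]; omega
  have c5 : IsCoprime (5 : ℤ) (y ^ n : ℤ) := by
    apply IsCoprime.pow_right
    exact_mod_cast Nat.isCoprime_iff_coprime.2 ((Nat.Prime.coprime_iff_not_dvd (by norm_num)).2 h5)
  have c7 : IsCoprime (7 : ℤ) (y ^ n : ℤ) := by
    apply IsCoprime.pow_right
    exact_mod_cast Nat.isCoprime_iff_coprime.2 ((Nat.Prime.coprime_iff_not_dvd (by norm_num)).2 h7)
  have c1 : IsCoprime (1 : ℤ) (y ^ n : ℤ) := isCoprime_one_left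
  have d1 : X1 - 2 ∣ ((y ^ n : ℤ) : 𝓞 K) := ⟨(X2 - 2) * (X3 - 2) * (X4 - 2), by rw [← hprod']; ring⟩
  have d2 : X2 - 2 ∣ ((y ^ n : ℤ) : 𝓞 K) := ⟨(X1 - 2) * (X3 - 2) * (X4 - 2), by rw [← hprod']; ring⟩
  have d3 : X3 - 2 ∣ ((y ^ n : ℤ) : 𝓞 K) := ⟨(X1 - 2) * (X2 - 2) * (X4 - 2), by rw [← hprod']; ring⟩
  have e12 : IsCoprime (X1 - 2) (X2 - 2) := cop_aux _ _ (-2) (-X1) 5 _ c5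
    (by push_cast; linear_combination -h12) d1
  have e13 : IsCoprime (X1 - 2) (X3 - 2) := cop_aux _ _ (-3) (-(1 + X1)) 7 _ c7
    (by push_cast; linear_combination -h13) d1
  have e14 : IsCoprime (X1 - 2) (X4 - 2) := cop_aux _ _ 1 (X1 - 1) 1 _ c1
    (by push_cast; linear_combination h14) d1
  have e23 : IsCoprime (X2 - 2) (X3 - 2) := cop_aux _ _ 1 (X2 - 1) 1 _ c1
    (by push_cast; linear_combination h23) d2
  have e24 : IsCoprime (X2 - 2) (X4 - 2) := cop_aux _ _ (-3) (-(1 + X2)) 7 _ c7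
    (by push_cast; linear_combination -h24) d2
  have e34 : IsCoprime (X3 - 2) (X4 - 2) := cop_aux _ _ (-2) (-X3) 5 _ c5
    (by push_cast; linear_combination -h34) d3
  push_cast at hprod' hN0
  have hne : ∀ a b : 𝓞 K, a * b = (y : 𝓞 K) ^ n → a ≠ 0 := by
    rintro a b hab rfl
    rw [zero_mul] at hab
    exact hN0 hab.symm
  have g1 : (X1 - 2) * ((X2 - 2) * (X3 - 2) * (X4 - 2)) = (y : 𝓞 K) ^ n := by rw [← hprod']; ring
  have g2 : (X2 - 2) * ((X1 - 2) * (X3 - 2) * (X4 - 2)) = (y : 𝓞 K) ^ n := by rw [← hprod']; ring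
  have g3 : (X3 - 2) * ((X1 - 2) * (X2 - 2) * (X4 - 2)) = (y : 𝓞 K) ^ n := by rw [← hprod']; ring
  have s1 := span_pow_aux _ _ _ n ((e12.mul_right e13).mul_right e14) g1
  have s2 := span_pow_aux _ _ _ n ((e12.symm.mul_right e23).mul_right e24) g2
  have s3 := span_pow_aux _ _ _ n ((e13.symm.mul_right e23.symm).mul_right e34) g3
  have hψ : ∀ q ∈ Q0, ∀ c : ℤ, ((c : ZMod q) = 2 ∨ (c : ZMod q) = 3 ∨ (2 * c + 1 : ZMod q) = 0) →
      ∃ ψ : 𝓞 K →+* ZMod q, ψ X1 = c := by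
    intro q hq c hc
    have hq0 : (12 * m + 25 : ZMod q) = 0 := by
      have h1 : ((12 * m + 25 : ℤ) : ZMod q) = 0 := by
        rw [hy]; push_cast
        rw [(ZMod.natCast_eq_zero_iff _ _).2 (hQy q hq), zero_pow (by omega)]
      exact_mod_cast h1
    obtain ⟨ψ, hψ⟩ := exists_hom' h hm hgen q (hQ0 q hq).1 (hQ0 q hq).2 hq0 c hc
    exact ⟨ψ, hψ X1 hX1⟩
  have hE := fun p hp hpn => lemE p hp Q0 hQ0 (hF p hp hpn) X1 X2 X3 U h12 h13 hU hψ
  let u1 : (𝓞 K)ˣ := Units.mkOfMulEqOne X1 (-X2) (by linear_combination -h12)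
  let u3 : (𝓞 K)ˣ := Units.mkOfMulEqOne X3 (-X4) (by linear_combination -h34)
  let uU : (𝓞 K)ˣ := Units.mkOfMulEqOne U U' hUU
  apply class_abs n hn ![X1 - 2, X2 - 2, X3 - 2]
  · intro i
    fin_cases i
    · exact hne _ _ g1
    · exact hne _ _ g2
    · exact hne _ _ g3
  · intro i
    fin_cases i
    · exact s1
    · exact s2
    · exact s3
  · intro p hp hpn f hf w γ hw
    obtain ⟨s, e, v, he, hz⟩ := units_lemma (h.rank hm hgen) (h.tors hm hgen) p hp ![u1, u3, uU]
      (by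
        intro e he s v hv
        have hv' := congrArg (fun z : (𝓞 K)ˣ => (z : 𝓞 K)) hv
        simp [Fin.prod_univ_three, u1, u3, uU] at hv'
        have := hE p hp hpn s (e 0) (e 1) (e 2) 0 0 0 (he 0) (he 1) (he 2) hp.pos hp.pos hp.pos
          (v : 𝓞 K) (by rw [← hv']; ring)
        intro i
        fin_cases i
        · exact this.1
        · exact this.2.1
        · exact this.2.2.1) w
    have hz' := congrArg (fun z : (𝓞 K)ˣ => (z : 𝓞 K)) hz
    simp [Fin.prod_univ_three, u1, u3, uU] at hz'
    simp [Fin.prod_univ_three] at hw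
    have hvp : (v : 𝓞 K) ^ p * ((v⁻¹ : (𝓞 K)ˣ) : 𝓞 K) ^ p = 1 := by
      rw [← mul_pow]; simp
    have := hE p hp hpn s (e 0) (e 1) (e 2) (f 0) (f 1) (f 2) (he 0) (he 1) (he 2) (hf 0) (hf 1)
      (hf 2) (γ * ((v⁻¹ : (𝓞 K)ˣ) : 𝓞 K)) (by
        rw [mul_pow, ← hw, hz']
        linear_combination (-((-1) ^ s * X1 ^ e 0 * X3 ^ e 1 * U ^ e 2 * (X1 - 2) ^ f 0 *
          (X2 - 2) ^ f 1 * (X3 - 2) ^ f 2)) * hvp)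
    intro i
    fin_cases i
    · exact this.2.2.2.1
    · exact this.2.2.2.2.1
    · exact this.2.2.2.2.2
end clsec
section finsec
open Polynomial NumberField

/-- The fields used in the construction. -/
def GoodField (n : ℕ) (Q0 : Finset ℕ) (K : IntermediateField ℚ ℂ) (y : ℕ) (m : ℤ) : Prop :=
  y % 12 = 1 ∧ ¬ 5 ∣ y ∧ ¬ 7 ∣ y ∧ (∀ q ∈ Q0, q ∣ y) ∧ (12 * m + 25 : ℤ) = y ^ n ∧ 12 ≤ m ∧
    NumberField K ∧ ∃ x : K, IsRt m x ∧ Algebra.adjoin ℚ {x} = ⊤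

theorem exists_goodField (n : ℕ) (hn : 1 < n) (Q0 : Finset ℕ) (y : ℕ) (h1 : 1 < y)
    (h12 : y % 12 = 1) (h5 : ¬ 5 ∣ y) (h7 : ¬ 7 ∣ y) (hQ : ∀ q ∈ Q0, q ∣ y) :
    ∃ K m, GoodField n Q0 K y m := by
  have hmod : (y ^ n) % 12 = 1 := by
    rw [Nat.pow_mod, h12]; simp
  have hge : 169 ≤ y ^ n := by
    calc 169 = 13 ^ 2 := by norm_num
      _ ≤ y ^ 2 := Nat.pow_le_pow_left (by omega) 2
      _ ≤ y ^ n := Nat.pow_le_pow_right (by omega) hn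
  obtain ⟨m, hm⟩ : ∃ m : ℤ, (12 * m + 25 : ℤ) = ((y ^ n : ℕ) : ℤ) := ⟨((y ^ n : ℕ) - 25 : ℤ) / 12, by omega⟩
  have hm12 : 12 ≤ m := by omega
  obtain ⟨η, hη⟩ := IsAlgClosed.exists_aeval_eq_zero ℂ (FQ m) (by
    have := (FQ_irreducible m hm12).natDegree_pos
    exact (natDegree_pos_iff_degree_pos.1 this).ne')
  have hIntegral : IsIntegral ℚ η := ⟨FQ m, FQ_monic m, hη⟩
  rw [FQ_aeval] at hη
  have hfd : FiniteDimensional ℚ (IntermediateField.adjoin ℚ {η}) :=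
    IntermediateField.adjoin.finiteDimensional hIntegral
  refine ⟨IntermediateField.adjoin ℚ {η}, m, h12, h5, h7, hQ, by exact_mod_cast hm, hm12, ⟨⟩,
    IntermediateField.AdjoinSimple.gen ℚ η, ?_, ?_⟩
  · unfold IsRt
    apply (IntermediateField.adjoin ℚ {η}).val.injective
    change (IntermediateField.adjoin ℚ {η}).val _ = (IntermediateField.adjoin ℚ {η}).val 0
    have e2 : (IntermediateField.adjoin ℚ {η}).val 2 = 2 := map_ofNat _ 2
    simp only [map_add, map_sub, map_mul, map_pow, map_intCast, map_one, map_zero, e2]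
    have e3 : (IntermediateField.adjoin ℚ {η}).val (IntermediateField.AdjoinSimple.gen ℚ η) = η := by
      simp
    rw [e3]
    linear_combination hη
  · have := (IntermediateField.adjoin.powerBasis hIntegral).adjoin_gen_eq_top
    rwa [IntermediateField.adjoin.powerBasis_gen] at this

theorem nonsq (m : ℤ) (hm : 12 ≤ m) (z : ℤ) : z ^ 2 ≠ m ^ 2 - 4 := by
  intro h
  rw [← sq_abs z] at h
  have h0 := abs_nonneg z
  generalize |z| = t at *
  rcases le_or_gt m t with h1 | h1
  · nlinarith
  · have : t ≤ m - 1 := by omega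
    nlinarith

theorem goodField_prime (n : ℕ) (Q0 : Finset ℕ) (K : IntermediateField ℚ ℂ) (y : ℕ) (m : ℤ)
    (h : GoodField n Q0 K y m) : ∃ q : ℕ, q.Prime ∧ 7 < q ∧ IsEmpty (𝓞 K →+* ZMod q) := by
  obtain ⟨-, -, -, -, -, hm, hNF, x, hx, -⟩ := h
  obtain ⟨X1, X2, X3, X4, U, U', -, -, -, -, -, -, -, hd, -⟩ := exists_elts hx
  obtain ⟨q, hq, hq7, hz⟩ := lemmaB 2 Nat.prime_two (m ^ 2 - 4) (nonsq m hm) 7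
  refine ⟨q, hq, hq7, ⟨fun ψ => ?_⟩⟩
  apply hz (ψ (2 * U + m))
  rw [← map_pow, hd, map_intCast]

theorem goodField_isEmpty (n : ℕ) (Q0 : Finset ℕ) (K : IntermediateField ℚ ℂ) (y : ℕ) (m : ℤ)
    (h : GoodField n Q0 K y m) (hn : n ≠ 0) (q : ℕ) (hq : q.Prime) (hq7 : 7 < q) (hqy : q ∣ y) :
    ¬ IsEmpty (𝓞 K →+* ZMod q) := by
  obtain ⟨-, -, -, -, hy, hm, hNF, x, hx, hgen⟩ := h
  have hq0 : (12 * m + 25 : ZMod q) = 0 := by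
    have h1 : ((12 * m + 25 : ℤ) : ZMod q) = 0 := by
      rw [hy]; push_cast
      rw [(ZMod.natCast_eq_zero_iff _ _).2 hqy, zero_pow hn]
    exact_mod_cast h1
  obtain ⟨ψ, -⟩ := exists_hom' hx hm hgen q hq hq7 hq0 2 (by left; norm_num)
  exact fun h => h.false ψ

theorem goodField_infinite (n : ℕ) (hn : 1 < n) (Q0 : Finset ℕ)
    (hQ0 : ∀ q ∈ Q0, q.Prime ∧ 7 < q) :
    {K : IntermediateField ℚ ℂ | ∃ y m, GoodField n Q0 K y m}.Infinite := by
  classical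
  intro hfin
  have h1 : ∀ K : IntermediateField ℚ ℂ, ∃ q : ℕ, (∃ y m, GoodField n Q0 K y m) →
      q.Prime ∧ 7 < q ∧ IsEmpty (𝓞 K →+* ZMod q) := by
    intro K
    by_cases hK : ∃ y m, GoodField n Q0 K y m
    · obtain ⟨y, m, h⟩ := hK
      obtain ⟨q, hq⟩ := goodField_prime n Q0 K y m h
      exact ⟨q, fun _ => hq⟩
    · exact ⟨0, fun h => absurd h hK⟩
  choose qq hqq using h1
  let Q1 : Finset ℕ := Q0 ∪ hfin.toFinset.image qq
  have hQ1 : ∀ q ∈ Q1, q.Prime ∧ 7 < q := by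
    intro q hq
    rcases Finset.mem_union.1 hq with h | h
    · exact hQ0 q h
    · obtain ⟨K, hK, rfl⟩ := Finset.mem_image.1 h
      have := hqq K (hfin.mem_toFinset.1 hK)
      exact ⟨this.1, this.2.1⟩
  have hT0 : 0 < ∏ q ∈ Q1, q := Finset.prod_pos fun q hq => (hQ1 q hq).1.pos
  have hcop : Nat.Coprime 420 (∏ q ∈ Q1, q) := by
    apply Nat.Coprime.prod_right
    intro q hq
    obtain ⟨hp, h7⟩ := hQ1 q hq
    rw [Nat.coprime_comm, hp.coprime_iff_not_dvd]
    intro hdvd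
    have e : 420 = 2 * 2 * 3 * 5 * 7 := by norm_num
    rw [e] at hdvd
    simp only [hp.dvd_mul] at hdvd
    rcases hdvd with (((h | h) | h) | h) | h <;>
    · have := Nat.le_of_dvd (by norm_num) h
      omega
  obtain ⟨y0, hy1, hy2⟩ := Nat.chineseRemainder hcop 1 0
  set T := ∏ q ∈ Q1, q with hT
  have hd : T ∣ y0 + 420 * T := dvd_add ((Nat.modEq_zero_iff_dvd).1 hy2) (dvd_mul_left _ _)
  have hmod : (y0 + 420 * T) % 420 = 1 := by
    have : y0 % 420 = 1 := hy1
    omega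
  have hyT : ∀ q ∈ Q1, q ∣ y0 + 420 * T := fun q hq => (Finset.dvd_prod_of_mem _ hq).trans hd
  obtain ⟨K, m, hK⟩ := exists_goodField n hn Q0 (y0 + 420 * T) (by omega) (by omega) (by omega)
    (by omega) (fun q hq => hyT q (Finset.mem_union_left _ hq))
  have hKS := hqq K ⟨_, m, hK⟩
  refine goodField_isEmpty n Q0 K _ m hK (by omega) (qq K) hKS.1 hKS.2.1 (hyT _ ?_) hKS.2.2
  apply Finset.mem_union_right
  apply Finset.mem_image_of_mem
  rw [hfin.mem_toFinset]
  exact ⟨_, m, hK⟩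

theorem eq_of_ringEquiv (K K' : IntermediateField ℚ ℂ) (h : Normal ℚ K) (e : K ≃+* K') :
    K = K' := by
  let f : K →ₐ[ℚ] K' := e.toRingHom.toRatAlgHom
  have h1 := @AlgHom.fieldRange_of_normal ℚ ℂ _ _ _ K (by convert h; exact Subsingleton.elim _ _) (K'.val.comp f)
  rw [← h1]
  ext z
  constructor
  · rintro ⟨w, rfl⟩
    exact (f w).2
  · intro hz
    refine ⟨e.symm ⟨z, hz⟩, ?_⟩
    change ((e (e.symm ⟨z, hz⟩) : K') : ℂ) = z
    simp
end finsec
/-- **Real biquadratic fields with large class group (`G = (ℤ/2ℤ)²`).**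
For every integer `n > 1` there are infinitely many pairwise non-isomorphic totally real
biquadratic fields `K`, each a splitting field of an irreducible polynomial
`x⁴ + ((yⁿ - 25)/6)x³ + 2x² - ((yⁿ - 25)/6)x + 1` with `y` a positive integer,
`y ≡ 1 (mod 12)`, `5 ∤ y` and `7 ∤ y`, such that `rank_n Cl(K) ≥ 3`. -/
theorem real_biquadratic_large_class_group (n : ℕ) (hn : 1 < n) :
    ∃ S : Set (IntermediateField ℚ ℂ), S.Infinite ∧
      (∀ K ∈ S, ∀ K' ∈ S, K ≠ K' → IsEmpty (K ≃+* K')) ∧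
      ∀ K ∈ S, ∃ y : ℕ, 0 < y ∧ y % 12 = 1 ∧ ¬ (5 ∣ y) ∧ ¬ (7 ∣ y) ∧
        (let P : Polynomial ℚ := X ^ 4 + C (((y : ℚ) ^ n - 25) / 6) * X ^ 3 + C 2 * X ^ 2 -
          C (((y : ℚ) ^ n - 25) / 6) * X + 1
         Irreducible P ∧ P.IsSplittingField ℚ K) ∧
        NumberField K ∧ Module.finrank ℚ K = 4 ∧ IsGalois ℚ K ∧
        Nonempty ((K ≃ₐ[ℚ] K) ≃* Multiplicative (ZMod 2 × ZMod 2)) ∧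
        TotallyReal K ∧
        HasZModRankGE (ClassGroup (𝓞 K)) n 3 := by
  obtain ⟨Q0, hQ0, hF⟩ := lemmaF n hn
  refine ⟨{K | ∃ y m, GoodField n Q0 K y m}, goodField_infinite n hn Q0 hQ0, ?_, ?_⟩
  · rintro K ⟨y, m, -, -, -, -, -, hm, hNF, x, hx, hgen⟩ K' - hne
    refine ⟨fun e => hne (eq_of_ringEquiv K K' ?_ e)⟩
    have := hx.galois hm hgen
    infer_instance
  · rintro K ⟨y, m, h12, h5, h7, hQy, hy, hm, hNF, x, hx, hgen⟩
    have hP : (X ^ 4 + C (((y : ℚ) ^ n - 25) / 6) * X ^ 3 + C 2 * X ^ 2 -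
          C (((y : ℚ) ^ n - 25) / 6) * X + 1 : ℚ[X]) = FQ m := by
      have : ((y : ℚ) ^ n - 25) / 6 = 2 * m := by
        have hy' : (12 * m + 25 : ℚ) = y ^ n := by exact_mod_cast hy
        rw [← hy']; ring
      rw [this]; rfl
    refine ⟨y, by omega, h12, h5, h7, ?_, hNF, hx.finrank hm hgen, hx.galois hm hgen,
      hx.klein hm hgen, hx.totallyReal hm hgen, class_main hx hm hgen n hn y hy h5 h7 Q0 hQ0 hQy hF⟩
    intro P
    have hP' : P = FQ m := hP
    rw [hP']
    exact ⟨FQ_irreducible m hm, hx.splitting hgen⟩
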